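/- Let K be a number field and S a finite set of places of K containing all the archimedean ones. Let φ be an endomorphism of ℙ¹ defined over K of degree d ≥ 2 with good reduction outside S. Suppose P ∈ ℙ¹(K) is a fixed point of φ and Q ∈ ℙ¹(K) is a periodic point of φ of period 2. Then |Tail(φ,K,P)| ≤ (C(3,|S|) + 3)(d−1), where C(3,s) = e^{18^9(3s−2)}. -/

import Mathlib

open NumberField IsDedekindDomain MvPolynomial
open scoped Classical nonZeroDivisors

set_option synthInstance.maxHeartbeats 1000000
set_option maxHeartbeats 1000000

noncomputable section

/-- The projective line over `K`. -/
abbrev P1 (K : Type*) [Field K] := Projectivization K (Fin 2 → K)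

variable {K : Type*} [Field K] [NumberField K]

/-- The additive `v`-adic valuation (order) of `x ∈ K`, with junk value `0` at `x = 0`,
normalized so that it is surjective onto `ℤ`. -/
def ordAt (v : HeightOneSpectrum (𝓞 K)) (x : K) : ℤ :=
  if hx : x = 0 then 0
  else - Multiplicative.toAdd (WithZero.unzero ((v.valuation K).ne_zero_iff.mpr hx))

/-- `min (v(x), v(y))` for a pair of coordinates, not both zero. -/
def minOrd (v : HeightOneSpectrum (𝓞 K)) (x y : K) : ℤ :=
  if x = 0 then ordAt v y else if y = 0 then ordAt v x else min (ordAt v x) (ordAt v y)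

/-- The `v`-adic logarithmic distance between two points of `ℙ¹(K)`:
`δ_v(P,Q) = v(x₁y₂ - x₂y₁) - min(v x₁, v y₁) - min(v x₂, v y₂)`, with value `⊤` when `P = Q`
(it is independent of the choice of homogeneous coordinates, so we compute it on the chosen
representatives). -/
def logDist (v : HeightOneSpectrum (𝓞 K)) (P Q : P1 K) : WithTop ℤ :=
  if P = Q then ⊤
  else ((ordAt v (P.rep 0 * Q.rep 1 - P.rep 1 * Q.rep 0)
        - minOrd v (P.rep 0) (P.rep 1) - minOrd v (Q.rep 0) (Q.rep 1) : ℤ) : WithTop ℤ)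

/-- An endomorphism of `ℙ¹` of degree `d` defined over `K`, given by a pair of homogeneous
forms of degree `d` with no common zero over the algebraic closure, together with the induced
self-map of `ℙ¹(K)`. -/
structure P1Map (K : Type*) [Field K] (d : ℕ) where
  toFun : P1 K → P1 K
  F : MvPolynomial (Fin 2) K
  G : MvPolynomial (Fin 2) K
  homF : F.IsHomogeneous d
  homG : G.IsHomogeneous d
  coprime : ∀ x y : AlgebraicClosure K,
    aeval ![x, y] F = 0 → aeval ![x, y] G = 0 → x = 0 ∧ y = 0
  compat : ∀ (x y : K) (hxy : ![x, y] ≠ 0)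
    (h : ![eval ![x, y] F, eval ![x, y] G] ≠ 0),
    toFun (Projectivization.mk K ![x, y] hxy) =
      Projectivization.mk K ![eval ![x, y] F, eval ![x, y] G] h

variable {d : ℕ}

/-- `φ` has good reduction at the finite place `v`: some representing pair of forms has
coefficients in the valuation ring at `v`, not all in the maximal ideal, and the reductions
of the two forms modulo `v` have no common zero in `ℙ¹` of the algebraic closure of the
residue field. -/
def GoodReductionAt (φ : P1Map K d) (v : HeightOneSpectrum (𝓞 K)) : Prop :=
  ∃ c : K, c ≠ 0 ∧
    ∃ F₀ G₀ : MvPolynomial (Fin 2) (v.valuation (K := K)).valuationSubring,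
      MvPolynomial.map ((v.valuation (K := K)).valuationSubring.subtype) F₀ = C c * φ.F ∧
      MvPolynomial.map ((v.valuation (K := K)).valuationSubring.subtype) G₀ = C c * φ.G ∧
      ((∃ m, F₀.coeff m ∉ IsLocalRing.maximalIdeal (v.valuation (K := K)).valuationSubring) ∨
        (∃ m, G₀.coeff m ∉ IsLocalRing.maximalIdeal (v.valuation (K := K)).valuationSubring)) ∧
      ∀ x y : AlgebraicClosure
          (IsLocalRing.ResidueField (v.valuation (K := K)).valuationSubring),
        eval ![x, y] (MvPolynomial.map
          ((algebraMap (IsLocalRing.ResidueField (v.valuation (K := K)).valuationSubring)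
              (AlgebraicClosure _)).comp
            (IsLocalRing.residue _)) F₀) = 0 →
        eval ![x, y] (MvPolynomial.map
          ((algebraMap (IsLocalRing.ResidueField (v.valuation (K := K)).valuationSubring)
              (AlgebraicClosure _)).comp
            (IsLocalRing.residue _)) G₀) = 0 →
        x = 0 ∧ y = 0

/-- `φ` has good reduction outside `S`, where `S` consists of all archimedean places together
with the finite places in `T`. -/
def GoodReductionOutside (φ : P1Map K d) (T : Finset (HeightOneSpectrum (𝓞 K))) : Prop :=
  ∀ v ∉ T, GoodReductionAt φ v

/-- `P` is a periodic point of `φ`. -/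
def IsPeriodicPoint (φ : P1Map K d) (P : P1 K) : Prop :=
  ∃ n, 0 < n ∧ φ.toFun^[n] P = P

/-- `P` is a preperiodic point of `φ`. -/
def IsPreperiodicPoint (φ : P1Map K d) (P : P1 K) : Prop :=
  ∃ m, IsPeriodicPoint φ (φ.toFun^[m] P)

/-- `P` is a tail point of `φ`: preperiodic but not periodic. -/
def IsTailPoint (φ : P1Map K d) (P : P1 K) : Prop :=
  IsPreperiodicPoint φ P ∧ ¬ IsPeriodicPoint φ P

/-- The set `Tail(φ,K,P)` of `K`-rational tail points of `P`: non-periodic points having `P`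
in their forward orbit. -/
def TailOf (φ : P1Map K d) (P : P1 K) : Set (P1 K) :=
  {Q | ¬ IsPeriodicPoint φ Q ∧ ∃ n, φ.toFun^[n] Q = P}

/-- `P = [a:b]` is a critical point of `φ = [F:G]`: the algebraic condition
`φ([x:y]) = φ([a:b])`, i.e. the form `G(a,b)·F(X,Y) - F(a,b)·G(X,Y)`, vanishes to order
at least `2` at `[a:b]`. -/
def IsCriticalPt (φ : P1Map K d) (P : P1 K) : Prop :=
  ∃ (a b : K) (hab : ![a, b] ≠ 0), P = Projectivization.mk K ![a, b] hab ∧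
    (C b * X 0 - C a * X 1) ^ 2 ∣
      (C (eval ![a, b] φ.G) * φ.F - C (eval ![a, b] φ.F) * φ.G)

/-- `P` belongs to a critical cycle of `φ`: it lies in the orbit of a critical periodic
point. -/
def InCriticalCycle (φ : P1Map K d) (P : P1 K) : Prop :=
  ∃ Q, IsCriticalPt φ Q ∧ IsPeriodicPoint φ Q ∧ ∃ n, φ.toFun^[n] Q = P

/-- The cardinality `|S|` of the set of places `S` consisting of all archimedean places
together with the finite places in `T`. -/
def sCard (K : Type*) [Field K] [NumberField K] (T : Finset (HeightOneSpectrum (𝓞 K))) : ℕ :=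
  T.card + Fintype.card (InfinitePlace K)

/-- `B(s) = 2^{16 s}`. -/
def Bconst (s : ℕ) : ℕ := 2 ^ (16 * s)

/-- `C(n,s) = e^{(6n)^{3n} (n s + 1 - n)}`. -/
def Cconst (n s : ℕ) : ℝ := Real.exp ((6 * n : ℝ) ^ (3 * n) * (n * s + 1 - n))

/-- `CV(d,s) = (3B(s)+13)d + 27B(s) + C(5,s) + 6C(3,s) + 32`. -/
def CVconst (d s : ℕ) : ℝ :=
  (3 * (Bconst s : ℝ) + 13) * d + 27 * (Bconst s : ℝ) + Cconst 5 s + 6 * Cconst 3 s + 32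

/-- `L₁(d,s) = (d-1)(1 + d(1 + B(s)))`. -/
def L1const (d s : ℕ) : ℕ := (d - 1) * (1 + d * (1 + Bconst s))

/-- `L₂(d,s) = max{(2(C(3,s)+2)+1)d + 1, (d-1)(1 + B(s)(B(s) + C(3,s) + 3))}`. -/
def L2const (d s : ℕ) : ℝ :=
  max ((2 * (Cconst 3 s + 2) + 1) * d + 1)
    (((d : ℝ) - 1) * (1 + (Bconst s : ℝ) * ((Bconst s : ℝ) + Cconst 3 s + 3)))

/-- `L₃(d,s) = ((1 + 3B(s))B(s) + 1)(d-1)`. -/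
def L3const (d s : ℕ) : ℕ := ((1 + 3 * Bconst s) * Bconst s + 1) * (d - 1)

/-- `L₄(d,s) = (C(3,s) + 3)(d-1)`. -/
def L4const (d s : ℕ) : ℝ := (Cconst 3 s + 3) * ((d : ℝ) - 1)

end

/-! ### Counting -/

lemma tb_sum_Icc (M : ℝ) (hM : 0 < M) (J : ℕ) :
    ∑ j ∈ Finset.Icc (-(J : ℤ)) J, Real.exp (-(|j| : ℤ) / M) ≤ 1 + 2 * M * (1 - Real.exp (-(J : ℝ) / M)) := by
  induction J with
  | zero => simp
  | succ J ih =>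
    have h1 : Finset.Icc (-((J + 1 : ℕ) : ℤ)) ((J + 1 : ℕ) : ℤ)
        = insert (-((J + 1 : ℕ) : ℤ)) (insert ((J + 1 : ℕ) : ℤ) (Finset.Icc (-(J : ℤ)) J)) := by
      ext j
      simp only [Finset.mem_Icc, Finset.mem_insert]
      omega
    rw [h1, Finset.sum_insert, Finset.sum_insert]
    · have e1 : ((|(-((J + 1 : ℕ) : ℤ))| : ℤ) : ℝ) = (J : ℝ) + 1 := by
        rw [abs_neg, abs_of_nonneg (by positivity)]; push_cast; ring
      have e2 : ((|(((J + 1 : ℕ) : ℤ))| : ℤ) : ℝ) = (J : ℝ) + 1 := by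
        rw [abs_of_nonneg (by positivity)]; push_cast; ring
      rw [e1, e2]
      have e3 : Real.exp (-(J : ℝ) / M) = Real.exp (1 / M) * Real.exp (-((J : ℝ) + 1) / M) := by
        rw [← Real.exp_add]; congr 1; field_simp; ring
      have e4 : 1 / M + 1 ≤ Real.exp (1 / M) := Real.add_one_le_exp _
      have e5 : 0 < Real.exp (-((J : ℝ) + 1) / M) := Real.exp_pos _
      push_cast at ih ⊢
      rw [e3] at ih
      set r := Real.exp (-((J : ℝ) + 1) / M)
      set q := Real.exp (1 / M)
      have e6 : 1 ≤ M * (q - 1) := by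
        have : M * (1 / M) ≤ M * (q - 1) := by
          apply mul_le_mul_of_nonneg_left _ hM.le; linarith
        rwa [mul_one_div_cancel hM.ne'] at this
      nlinarith [mul_le_mul_of_nonneg_right e6 e5.le]
    · simp only [Finset.mem_Icc]; omega
    · simp only [Finset.mem_Icc, Finset.mem_insert]; omega

lemma tb_int_count {ι : Type*} [Fintype ι] (M : ℝ) (hM : 0 < M) (s : Finset (ι → ℤ))
    (hs : ∀ k ∈ s, ((∑ i, |k i| : ℤ) : ℝ) ≤ M * Fintype.card ι) :
    (s.card : ℝ) ≤ (Real.exp 1 * (2 * M + 1)) ^ Fintype.card ι := by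
  obtain ⟨J, hJ⟩ : ∃ J : ℕ, ∀ k ∈ s, ∀ i, |k i| ≤ (J : ℤ) := by
    refine ⟨⌈M * Fintype.card ι⌉₊, fun k hk i => ?_⟩
    have h1 := hs k hk
    have h2 : |k i| ≤ ∑ i, |k i| :=
      Finset.single_le_sum (f := fun i => |k i|) (fun i _ => abs_nonneg _) (Finset.mem_univ i)
    have h3 : ((|k i| : ℤ) : ℝ) ≤ (⌈M * Fintype.card ι⌉₊ : ℝ) :=
      le_trans (by exact_mod_cast h2) (h1.trans (Nat.le_ceil _))
    exact_mod_cast h3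
  have hsub : s ⊆ Fintype.piFinset (fun _ : ι => Finset.Icc (-(J : ℤ)) J) := by
    intro k hk
    rw [Fintype.mem_piFinset]
    intro i
    rw [Finset.mem_Icc]
    exact abs_le.mp (hJ k hk i)
  have h1 : (s.card : ℝ) ≤ ∑ k ∈ s, Real.exp (Fintype.card ι) * ∏ i, Real.exp (-(|k i| : ℤ) / M) := by
    rw [Finset.card_eq_sum_ones]
    push_cast
    apply Finset.sum_le_sum
    intro k hk
    rw [← Real.exp_sum, ← Real.exp_add, ← Finset.sum_div, ← Real.exp_zero]
    apply Real.exp_le_exp.mpr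
    have := hs k hk
    rw [Finset.sum_neg_distrib]
    push_cast at this
    have h3 : (∑ i, |(k i : ℝ)|) / M ≤ Fintype.card ι := by
      rw [div_le_iff₀ hM]; linarith
    push_cast
    rw [neg_div]
    linarith
  have h2 : ∑ k ∈ s, Real.exp (Fintype.card ι) * ∏ i, Real.exp (-(|k i| : ℤ) / M) ≤
      ∑ k ∈ Fintype.piFinset (fun _ : ι => Finset.Icc (-(J : ℤ)) J),
        Real.exp (Fintype.card ι) * ∏ i, Real.exp (-(|k i| : ℤ) / M) :=
    Finset.sum_le_sum_of_subset_of_nonneg hsub (fun _ _ _ => by positivity)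
  refine h1.trans (h2.trans ?_)
  have h5 := Finset.prod_univ_sum (fun _ : ι => Finset.Icc (-(J : ℤ)) J)
    (fun _ j => Real.exp (-(|j| : ℤ) / M))
  rw [← Finset.mul_sum, ← h5, mul_pow, ← Real.exp_nat_mul, mul_one]
  apply mul_le_mul_of_nonneg_left _ (Real.exp_pos _).le
  rw [Finset.prod_const, Finset.card_univ]
  apply pow_le_pow_left₀ (Finset.sum_nonneg (fun _ _ => (Real.exp_pos _).le))
  refine (tb_sum_Icc M hM J).trans ?_
  have : 0 < Real.exp (-(J : ℝ) / M) := Real.exp_pos _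
  nlinarith

/-- box counting -/
lemma tb_box {ι α : Type*} [Fintype ι] [Nonempty ι] (E : Finset α) (f : α → ι → ℝ) (L g B : ℝ)
    (hL : 0 ≤ L) (hg : 0 < g) (hB : 0 ≤ B)
    (hf : ∀ a ∈ E, ∑ i, |f a i| ≤ L * Fintype.card ι)
    (hF : ∀ F ⊆ E, (∀ a ∈ F, ∀ b ∈ F, ∀ i, |f a i - f b i| ≤ g) → (F.card : ℝ) ≤ B) :
    (E.card : ℝ) ≤ B * (Real.exp 1 * (2 * (L / g + 1) + 1)) ^ Fintype.card ι := by
  set κ : α → ι → ℤ := fun a i => ⌊f a i / g⌋ with hκ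
  have h1 : ∀ k ∈ E.image κ, ((E.filter (fun a => κ a = k)).card : ℝ) ≤ B := by
    intro k _
    apply hF _ (Finset.filter_subset _ _)
    intro a ha b hb i
    have ha' : κ a i = k i := congrFun (Finset.mem_filter.mp ha).2 i
    have hb' : κ b i = k i := congrFun (Finset.mem_filter.mp hb).2 i
    have h3 : ⌊f a i / g⌋ = ⌊f b i / g⌋ := by
      simp only [hκ] at ha' hb'
      rw [ha', hb']
    have := Int.abs_sub_lt_one_of_floor_eq_floor h3
    rw [← sub_div, abs_div, abs_of_pos hg, div_lt_one hg] at this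
    exact this.le
  have h2 : (E.card : ℝ) ≤ B * (E.image κ).card := by
    rw [Finset.card_eq_sum_card_image κ E]
    push_cast
    calc _ ≤ ∑ k ∈ E.image κ, B := Finset.sum_le_sum h1
      _ = _ := by rw [Finset.sum_const, nsmul_eq_mul, mul_comm]
  refine h2.trans (mul_le_mul_of_nonneg_left ?_ hB)
  apply tb_int_count _ (by positivity)
  intro k hk
  obtain ⟨a, ha, rfl⟩ := Finset.mem_image.mp hk
  have h4 : ∀ i, |(κ a i : ℝ)| ≤ |f a i| / g + 1 := by
    intro i
    have e1 : (κ a i : ℝ) ≤ f a i / g := Int.floor_le _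
    have e2 : f a i / g < κ a i + 1 := Int.lt_floor_add_one _
    have e3 : |f a i| / g = |f a i / g| := by rw [abs_div, abs_of_pos hg]
    rw [e3, abs_le]
    constructor
    · linarith [neg_abs_le (f a i / g)]
    · linarith [le_abs_self (f a i / g)]
  push_cast
  calc ∑ i, |(κ a i : ℝ)| ≤ ∑ i, (|f a i| / g + 1) := Finset.sum_le_sum (fun i _ => h4 i)
    _ = (∑ i, |f a i|) / g + Fintype.card ι := by
      rw [Finset.sum_add_distrib, Finset.sum_div]; simp
    _ ≤ (L * Fintype.card ι) / g + Fintype.card ι := by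
      gcongr; exact hf a ha
    _ = _ := by ring
/-! ### Heights -/

section tbHeights

variable {K : Type*} [Field K] [NumberField K]

open Height

lemma tb_inf_add (v : InfinitePlace K) (x y : K) : v (x + y) ≤ v x + v y := v.1.add_le x y

lemma tb_inf_sub (v : InfinitePlace K) (x y : K) : v (x - y) ≤ v x + v y := by
  have := tb_inf_add v x (-y)
  have h2 : v (-y) = v y := v.1.map_neg y
  rwa [h2, ← sub_eq_add_neg] at this

lemma tb_fms (x : K) : Function.HasFiniteMulSupport (fun v : FinitePlace K => max (v x) 1) := by
  rcases eq_or_ne x 0 with rfl | hx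
  · have : (fun v : FinitePlace K => max (v (0 : K)) 1) = fun _ => 1 := by
      ext v; simp
    rw [this]; simp [Function.HasFiniteMulSupport]
  · refine (FinitePlace.hasFiniteMulSupport hx).subset ?_
    intro v hv
    simp only [Function.mem_mulSupport] at hv ⊢
    intro h
    exact hv (by rw [h]; simp)

lemma tb_fms_sup {ι : Type*} [Finite ι] [Nonempty ι] {r : ι → K} (hr : r ≠ 0) :
    Function.HasFiniteMulSupport (fun v : FinitePlace K => ⨆ i, v (r i)) := by
  haveI := Fintype.ofFinite ι
  have hfin : (⋃ i : {i // r i ≠ 0}, Function.mulSupport (fun v : FinitePlace K => v (r i))).Finite :=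
    Set.finite_iUnion (fun i => FinitePlace.hasFiniteMulSupport i.2)
  refine hfin.subset ?_
  intro v hv
  by_contra hc
  apply hv
  simp only [Set.mem_iUnion, Function.mem_mulSupport, not_exists, not_not] at hc
  obtain ⟨i, hi⟩ := Function.ne_iff.mp hr
  apply le_antisymm
  · apply ciSup_le
    intro j
    by_cases hj : r j = 0
    · rw [hj]; simp
    · exact (hc ⟨j, hj⟩).le
  · exact Finite.le_ciSup_of_le i (hc ⟨i, hi⟩).ge

lemma tb_raw {ι : Type*} [Finite ι] [Nonempty ι] {r : ι → K} (hr : r ≠ 0) (B : ℝ)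
    (Gi : InfinitePlace K → ℝ) (Gf : FinitePlace K → ℝ) (hGf : Function.HasFiniteMulSupport Gf)
    (hi : ∀ (v : InfinitePlace K) i, v (r i) ≤ B * Gi v)
    (hf : ∀ (v : FinitePlace K) i, v (r i) ≤ Gf v) :
    mulHeight r ≤ B ^ totalWeight K * ((∏ v : InfinitePlace K, Gi v ^ v.mult) * ∏ᶠ v, Gf v) := by
  rw [NumberField.mulHeight_eq hr, totalWeight_eq_sum_mult, ← Finset.prod_pow_eq_pow_sum,
    ← mul_assoc, ← Finset.prod_mul_distrib]
  have hBi : ∀ v : InfinitePlace K, (⨆ i, v (r i)) ≤ B * Gi v := fun v => ciSup_le (hi v)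
  have h0 : ∀ v : InfinitePlace K, 0 ≤ ⨆ i, v (r i) := fun v =>
    Real.iSup_nonneg (fun i => apply_nonneg v _)
  have h0' : ∀ v : FinitePlace K, 0 ≤ ⨆ i, v (r i) := fun v =>
    Real.iSup_nonneg (fun i => apply_nonneg v _)
  apply mul_le_mul
  · apply Finset.prod_le_prod
    · intro v _; exact pow_nonneg (h0 v) _
    · intro v _
      rw [← mul_pow]
      exact pow_le_pow_left₀ (h0 v) (hBi v) _
  · exact finprod_le_finprod (tb_fms_sup hr) h0' hGf (fun v => ciSup_le (hf v))
  · exact finprod_nonneg h0'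
  · apply Finset.prod_nonneg
    intro v _
    rw [← mul_pow]
    exact pow_nonneg ((h0 v).trans (hBi v)) _

lemma tb_mulHeight_le {ι : Type*} [Finite ι] [Nonempty ι] {r : ι → K} (hr : r ≠ 0) {B : ℝ} (hB : 0 < B)
    (x y : K) (a b : ℕ)
    (hi : ∀ (v : InfinitePlace K) i, v (r i) ≤ B * (max (v x) 1 ^ a * max (v y) 1 ^ b))
    (hf : ∀ (v : FinitePlace K) i, v (r i) ≤ max (v x) 1 ^ a * max (v y) 1 ^ b) :
    logHeight r ≤ a * logHeight₁ x + b * logHeight₁ y + totalWeight K * Real.log B := by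
  have h1 := tb_raw hr B (fun v => max (v x) 1 ^ a * max (v y) 1 ^ b)
    (fun v => max (v x) 1 ^ a * max (v y) 1 ^ b)
    (((tb_fms x).pow a).mul ((tb_fms y).pow b)) hi hf
  have h2 : (∏ v : InfinitePlace K, (max (v x) 1 ^ a * max (v y) 1 ^ b) ^ v.mult) *
      ∏ᶠ v : FinitePlace K, (max (v x) 1 ^ a * max (v y) 1 ^ b)
      = mulHeight₁ x ^ a * mulHeight₁ y ^ b := by
    have ha : Function.HasFiniteMulSupport (fun v : FinitePlace K => max (v x) 1 ^ a) :=
      (tb_fms x).pow a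
    have hb : Function.HasFiniteMulSupport (fun v : FinitePlace K => max (v y) 1 ^ b) :=
      (tb_fms y).pow b
    rw [finprod_mul_distrib ha hb,
      ← finprod_pow (tb_fms x), ← finprod_pow (tb_fms y), NumberField.mulHeight₁_eq,
      NumberField.mulHeight₁_eq]
    simp only [mul_pow, ← pow_mul, Finset.prod_mul_distrib, ← Finset.prod_pow]
    simp only [mul_comm a, mul_comm b]
    ring
  rw [h2] at h1
  simp only [logHeight_eq_log_mulHeight, logHeight₁_eq_log_mulHeight₁]
  refine (Real.log_le_log (mulHeight_pos r) h1).trans (le_of_eq ?_)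
  rw [Real.log_mul (by positivity) (by positivity), Real.log_mul (by positivity) (by positivity),
    Real.log_pow, Real.log_pow, Real.log_pow]
  ring

/-- cross product bound -/
lemma tb_cross {e r r' : Fin 3 → K} (he : e ≠ 0)
    (h1 : e 0 * r 0 + e 1 * r 1 + e 2 * r 2 = 0)
    (h2 : e 0 * r' 0 + e 1 * r' 1 + e 2 * r' 2 = 0)
    (hk : ¬ (r 1 * r' 2 - r 2 * r' 1 = 0 ∧ r 2 * r' 0 - r 0 * r' 2 = 0 ∧
      r 0 * r' 1 - r 1 * r' 0 = 0)) :
    logHeight e ≤ logHeight r + logHeight r' + totalWeight K * Real.log 2 := by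
  set k : Fin 3 → K := ![r 1 * r' 2 - r 2 * r' 1, r 2 * r' 0 - r 0 * r' 2,
    r 0 * r' 1 - r 1 * r' 0] with hkdef
  have k0 : k 0 = r 1 * r' 2 - r 2 * r' 1 := rfl
  have k1 : k 1 = r 2 * r' 0 - r 0 * r' 2 := rfl
  have k2 : k 2 = r 0 * r' 1 - r 1 * r' 0 := rfl
  have hkne : k ≠ 0 := by
    intro h
    apply hk
    rw [← k0, ← k1, ← k2, h]; simp
  have hr : r ≠ 0 := by rintro rfl; apply hk; simp
  have hr' : r' ≠ 0 := by rintro rfl; apply hk; simp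
  have e01 : e 0 * k 1 = e 1 * k 0 := by rw [k0, k1]; linear_combination (r' 2) * (-h1) + r 2 * h2
  have e12 : e 1 * k 2 = e 2 * k 1 := by rw [k1, k2]; linear_combination (r' 0) * (-h1) + r 0 * h2
  have e20 : e 2 * k 0 = e 0 * k 2 := by rw [k0, k2]; linear_combination (r' 1) * (-h1) + r 1 * h2
  have hij : ∀ i j, e i * k j = e j * k i := by
    intro i j
    fin_cases i <;> fin_cases j <;> simp [e01, e12, e20]
  obtain ⟨j, hj⟩ := Function.ne_iff.mp hkne
  have hj : k j ≠ 0 := hj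
  have hek : e = (e j / k j) • k := by
    ext i
    simp only [Pi.smul_apply, smul_eq_mul]
    rw [div_mul_eq_mul_div, eq_div_iff hj]; exact hij i j
  have hej : e j / k j ≠ 0 := by
    intro h0; rw [h0, zero_smul] at hek; exact he hek
  rw [hek, logHeight_smul_eq_logHeight _ hej]
  have hle : ∀ {p : K → ℝ} (r : Fin 3 → K) (i : Fin 3), p (r i) ≤ ⨆ i, p (r i) := fun {p} r i =>
    Finite.le_ciSup_of_le (f := fun i => p (r i)) i le_rfl
  have hmf : ∀ (v : FinitePlace K) (i j : Fin 3), v (r i) * v (r' j) ≤ (⨆ i, v (r i)) * ⨆ i, v (r' i) := by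
    intro v i j
    exact mul_le_mul (hle (p := v) r i) (hle (p := v) r' j) (apply_nonneg v _)
      (Real.iSup_nonneg (fun i => apply_nonneg v _))
  have hmi : ∀ (v : InfinitePlace K) (i j : Fin 3), v (r i) * v (r' j) ≤ (⨆ i, v (r i)) * ⨆ i, v (r' i) := by
    intro v i j
    exact mul_le_mul (hle (p := v) r i) (hle (p := v) r' j) (apply_nonneg v _)
      (Real.iSup_nonneg (fun i => apply_nonneg v _))
  have hsf : ∀ (v : FinitePlace K) (i j k l : Fin 3), v (r i * r' j - r k * r' l) ≤
      (⨆ i, v (r i)) * ⨆ i, v (r' i) := by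
    intro v i j k l
    rw [sub_eq_add_neg]
    refine (FinitePlace.add_le v _ _).trans (max_le ?_ ?_)
    · rw [map_mul]; exact hmf v i j
    · rw [map_neg_eq_map, map_mul]; exact hmf v k l
  have hsi : ∀ (v : InfinitePlace K) (i j k l : Fin 3), v (r i * r' j - r k * r' l) ≤
      2 * ((⨆ i, v (r i)) * ⨆ i, v (r' i)) := by
    intro v i j k l
    refine (tb_inf_sub v _ _).trans ?_
    rw [map_mul, map_mul]
    linarith [hmi v i j, hmi v k l]
  have h3 := tb_raw hkne 2 (fun v => (⨆ i, v (r i)) * ⨆ i, v (r' i))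
    (fun v => (⨆ i, v (r i)) * ⨆ i, v (r' i)) ((tb_fms_sup hr).mul (tb_fms_sup hr'))
    (by intro v i; fin_cases i
        · exact hsi v 1 2 2 1
        · exact hsi v 2 0 0 2
        · exact hsi v 0 1 1 0)
    (by intro v i; fin_cases i
        · exact hsf v 1 2 2 1
        · exact hsf v 2 0 0 2
        · exact hsf v 0 1 1 0)
  have h4 : (∏ v : InfinitePlace K, ((⨆ i, v (r i)) * ⨆ i, v (r' i)) ^ v.mult) *
      ∏ᶠ v : FinitePlace K, ((⨆ i, v (r i)) * ⨆ i, v (r' i)) = mulHeight r * mulHeight r' := by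
    rw [finprod_mul_distrib (tb_fms_sup hr) (tb_fms_sup hr'), NumberField.mulHeight_eq hr,
      NumberField.mulHeight_eq hr']
    simp only [mul_pow, Finset.prod_mul_distrib]
    ring
  rw [h4] at h3
  simp only [logHeight_eq_log_mulHeight]
  refine (Real.log_le_log (mulHeight_pos k) h3).trans (le_of_eq ?_)
  rw [Real.log_mul (by positivity) (by positivity), Real.log_mul (by positivity) (by positivity),
    Real.log_pow]
  ring

/-- one minus -/
lemma tb_one_sub (x : K) : logHeight₁ (1 - x) ≤ logHeight₁ x + totalWeight K * Real.log 2 := by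
  rw [logHeight₁_eq_logHeight]
  have := tb_mulHeight_le (r := ![1 - x, 1]) (by intro h; simpa using congrFun h 1)
    (B := 2) (by norm_num) x 0 1 0 ?_ ?_
  · simpa using this
  · intro v i
    have hm := le_max_right (v x) 1
    have hm' := le_max_left (v x) 1
    fin_cases i
    · have := tb_inf_sub v 1 x
      simp only [map_one] at this
      simp
      linarith
    · simp
      linarith
  · intro v i
    fin_cases i
    · have := FinitePlace.add_le v 1 (-x)
      rw [map_neg_eq_map, map_one] at this
      simpa [sub_eq_add_neg, max_comm] using this
    · simp

/-- archimedean repulsion -/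
lemma tb_repel {x : K} (hx : x ≠ 1) {t : ℝ} (h : ∀ v : InfinitePlace K, v (x - 1) ≤ Real.exp (-t)) :
    t * totalWeight K ≤ logHeight₁ x := by
  have hx1 : x - 1 ≠ 0 := sub_ne_zero.mpr hx
  have h1 := NumberField.prod_abs_eq_one hx1
  have h2 : ∏ w : InfinitePlace K, w (x - 1) ^ w.mult ≤ Real.exp (-t) ^ totalWeight K := by
    rw [totalWeight_eq_sum_mult, ← Finset.prod_pow_eq_pow_sum]
    apply Finset.prod_le_prod
    · intro v _; exact pow_nonneg (apply_nonneg v _) _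
    · intro v _; exact pow_le_pow_left₀ (apply_nonneg v _) (h v) _
  have h3 : ∏ᶠ w : FinitePlace K, w (x - 1) ≤ ∏ᶠ w : FinitePlace K, max (w x) 1 := by
    apply finprod_le_finprod (FinitePlace.hasFiniteMulSupport hx1) (fun v => apply_nonneg v _)
      (tb_fms x)
    intro v
    have := FinitePlace.add_le v x (-1)
    rw [map_neg_eq_map, map_one] at this
    simpa [sub_eq_add_neg] using this
  have h4 : ∏ᶠ w : FinitePlace K, max (w x) 1 ≤ mulHeight₁ x := by
    rw [NumberField.mulHeight₁_eq]
    apply le_mul_of_one_le_left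
    · exact finprod_nonneg (fun v => by positivity)
    · have h7 : ∏ v : InfinitePlace K, (1 : ℝ) ≤ ∏ v : InfinitePlace K, max (v x) 1 ^ v.mult := by
        apply Finset.prod_le_prod
        · intro v _; exact zero_le_one
        · intro v _; exact one_le_pow₀ (le_max_right _ _)
      simpa using h7
  have h5 : 1 ≤ Real.exp (-t) ^ totalWeight K * mulHeight₁ x := by
    rw [← h1]
    exact mul_le_mul h2 (h3.trans h4) (finprod_nonneg (fun v => apply_nonneg v _)) (by positivity)
  have h6 := Real.log_le_log one_pos h5
  rw [Real.log_one, Real.log_mul (by positivity) (by positivity), Real.log_pow, Real.log_exp] at h6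
  rw [logHeight₁_eq_log_mulHeight₁]
  linarith

/-- The local logarithms at the places of `S`. -/
noncomputable def tbL (T : Finset (HeightOneSpectrum (𝓞 K))) (x : K) :
    InfinitePlace K ⊕ T → ℝ
  | Sum.inl v => v.mult * Real.log (v x)
  | Sum.inr p => Real.log (FinitePlace.mk p.1 x)

lemma tbL_sum (T : Finset (HeightOneSpectrum (𝓞 K))) (x : K) :
    ∑ i, |tbL T x i| = ∑ v : InfinitePlace K, v.mult * |Real.log (v x)| +
      ∑ p ∈ T, |Real.log (FinitePlace.mk p x)| := by
  rw [Fintype.sum_sum_type]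
  congr 1
  · apply Finset.sum_congr rfl
    intro v _
    simp [tbL, abs_mul]
  · rw [← Finset.sum_coe_sort T]
    rfl

lemma tb_abs_log (t : ℝ) : |Real.log t| = Real.posLog t + Real.posLog t⁻¹ := by
  change _ = max 0 (Real.log t) + max 0 (Real.log t⁻¹)
  rw [Real.log_inv]
  rcases le_total 0 (Real.log t) with h | h
  · rw [abs_of_nonneg h, max_eq_right h, max_eq_left (by linarith)]; ring
  · rw [abs_of_nonpos h, max_eq_left h, max_eq_right (by linarith)]; ring

lemma tb_fs (x : K) : (Function.support (fun v : FinitePlace K => Real.posLog (v x))).Finite := by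
  refine (tb_fms x).subset ?_
  intro v hv
  simp only [Function.mem_mulSupport, Function.mem_support, Real.posLog_def] at hv ⊢
  intro h
  apply hv
  have h1 : v x ≤ 1 := by rw [← h]; exact le_max_left _ _
  exact max_eq_left (Real.log_nonpos (apply_nonneg v x) h1)

lemma tb_sum_T_le (T : Finset (HeightOneSpectrum (𝓞 K))) (x : K) :
    ∑ p ∈ T, Real.posLog (FinitePlace.mk p x) ≤ ∑ᶠ v : FinitePlace K, Real.posLog (v x) := by
  have hinj : Function.Injective (FinitePlace.mk (K := K)) := fun a b h => FinitePlace.mk_eq_iff.mp h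
  rw [finsum_eq_sum_of_support_subset (s := (tb_fs x).toFinset ∪ T.image FinitePlace.mk) _
    (by intro v hv; simp only [Finset.coe_union, Set.mem_union]; left; simpa using hv)]
  rw [← Finset.sum_image (f := fun v : FinitePlace K => Real.posLog (v x)) (hinj.injOn)]
  exact Finset.sum_le_sum_of_subset_of_nonneg Finset.subset_union_right
    (fun _ _ _ => Real.posLog_nonneg)

lemma tb_S_le (T : Finset (HeightOneSpectrum (𝓞 K))) (x : K) :
    ∑ i, |tbL T x i| ≤ 2 * logHeight₁ x := by
  rw [tbL_sum, two_mul]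
  nth_rewrite 2 [← logHeight₁_inv x]
  rw [NumberField.logHeight₁_eq, NumberField.logHeight₁_eq]
  have h1 := tb_sum_T_le T x
  have h2 := tb_sum_T_le T x⁻¹
  simp only [tb_abs_log, mul_add, Finset.sum_add_distrib]
  simp only [map_inv₀] at h2 ⊢
  linarith

lemma tb_height_le (T : Finset (HeightOneSpectrum (𝓞 K))) (x c : K) (n : ℕ)
    (h : ∀ p ∉ T, FinitePlace.mk p x ≤ max (FinitePlace.mk p c) 1 ^ n) :
    logHeight₁ x ≤ ∑ i, |tbL T x i| + n * logHeight₁ c := by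
  have hinj : Function.Injective (FinitePlace.mk (K := K)) := fun a b h => FinitePlace.mk_eq_iff.mp h
  rw [tbL_sum, NumberField.logHeight₁_eq, NumberField.logHeight₁_eq]
  have h1 : ∑ v : InfinitePlace K, (v.mult : ℝ) * Real.posLog (v x) ≤
      ∑ v : InfinitePlace K, v.mult * |Real.log (v x)| := by
    apply Finset.sum_le_sum
    intro v _
    apply mul_le_mul_of_nonneg_left _ (by positivity)
    rw [tb_abs_log]
    linarith [Real.posLog_nonneg (x := (v x)⁻¹)]
  have h2 : 0 ≤ ∑ v : InfinitePlace K, (v.mult : ℝ) * Real.posLog (v c) :=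
    Finset.sum_nonneg (fun v _ => mul_nonneg (by positivity) Real.posLog_nonneg)
  set W : Finset (FinitePlace K) := (tb_fs x).toFinset ∪ (tb_fs c).toFinset ∪ T.image FinitePlace.mk
    with hW
  rw [finsum_eq_sum_of_support_subset (s := W) (fun v : FinitePlace K => Real.posLog (v x))
    (by intro v hv; rw [hW]; simp only [Finset.coe_union, Set.mem_union]; left; left; simpa using hv)]
  rw [finsum_eq_sum_of_support_subset (s := W) (fun v : FinitePlace K => Real.posLog (v c))
    (by intro v hv; rw [hW]; simp only [Finset.coe_union, Set.mem_union]; left; right; simpa using hv)]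
  have h3 : ∑ p ∈ T, |Real.log (FinitePlace.mk p x)| =
      ∑ v ∈ W, if v ∈ T.image FinitePlace.mk then |Real.log (v x)| else 0 := by
    rw [← Finset.sum_filter, Finset.filter_mem_eq_inter,
      Finset.inter_eq_right.mpr Finset.subset_union_right, Finset.sum_image hinj.injOn]
  have h4 : ∑ v ∈ W, Real.posLog (v x) ≤ ∑ v ∈ W, ((if v ∈ T.image FinitePlace.mk then
      |Real.log (v x)| else 0) + n * Real.posLog (v c)) := by
    apply Finset.sum_le_sum
    intro v _
    have hc0 : 0 ≤ (n : ℝ) * Real.posLog (v c) := mul_nonneg (by positivity) Real.posLog_nonneg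
    split_ifs with hv
    · rw [tb_abs_log]
      linarith [Real.posLog_nonneg (x := (v x)⁻¹)]
    · rw [zero_add]
      have hp : FinitePlace.maximalIdeal v ∉ T := by
        intro hp; apply hv
        exact Finset.mem_image.mpr ⟨_, hp, FinitePlace.mk_maximalIdeal v⟩
      have h5 := h _ hp
      rw [FinitePlace.mk_maximalIdeal] at h5
      rw [Real.posLog_eq_log_max_one (apply_nonneg v c), Real.posLog_eq_log_max_one (apply_nonneg v x),
        ← Real.log_pow, max_comm 1 (v c)]
      apply Real.log_le_log (by positivity)
      apply max_le _ h5
      exact one_le_pow₀ (le_max_right _ _)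
  rw [Finset.sum_add_distrib, ← Finset.mul_sum] at h4
  rw [h3]
  have h6 : 0 ≤ (n : ℝ) * ∑ v : InfinitePlace K, (v.mult : ℝ) * Real.posLog (v c) := by positivity
  linarith

end tbHeights
/-! ### Pade approximation -/

section tbPade

open Finset

/-- Explicit Pade polynomial. -/
noncomputable def tbE {R : Type*} [CommRing R] (a c : ℕ) (z : R) : R :=
  ∑ j ∈ range (a + 1), (-1) ^ j * (((a + j).choose j * (2 * a + c + 1).choose (a - j) : ℕ) : R) * z ^ j

/-- Explicit Pade polynomial, the remainder term. -/
noncomputable def tbB {R : Type*} [CommRing R] (a c : ℕ) (z : R) : R :=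
  ∑ j ∈ range (c + 1), (-1) ^ j * (((a + j).choose j * (2 * a + c + 1).choose (c - j) : ℕ) : R) *
    z ^ (c - j)

lemma tbE_map {R S : Type*} [CommRing R] [CommRing S] (f : R →+* S) (a c : ℕ) (z : R) :
    f (tbE a c z) = tbE a c (f z) := by
  simp [tbE]

lemma tbB_map {R S : Type*} [CommRing R] [CommRing S] (f : R →+* S) (a c : ℕ) (z : R) :
    f (tbB a c z) = tbB a c (f z) := by
  simp [tbB]

lemma tb_beta (q p : ℕ) : ∫ s in (0 : ℝ)..1, s ^ p * (1 - s) ^ q =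
    (p.factorial * q.factorial : ℝ) / (p + q + 1).factorial := by
  induction q generalizing p with
  | zero =>
    simp [Nat.factorial_succ]
    field_simp
  | succ q ih =>
    have h1 : ∀ s ∈ Set.uIcc (0 : ℝ) 1, HasDerivAt (fun s : ℝ => s ^ (p + 1) * (1 - s) ^ (q + 1))
        ((p + 1) * (s ^ p * (1 - s) ^ (q + 1)) - (q + 1) * (s ^ (p + 1) * (1 - s) ^ q)) s := by
      intro s _
      have h2 := (hasDerivAt_pow (p + 1) s).mul (((hasDerivAt_id s).const_sub 1).pow (q + 1))
      refine h2.congr_deriv ?_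
      simp only [Nat.add_sub_cancel, id, Pi.pow_apply]
      push_cast
      ring
    have h3 := intervalIntegral.integral_eq_sub_of_hasDerivAt h1
      (Continuous.intervalIntegrable (by fun_prop) _ _)
    rw [intervalIntegral.integral_sub (Continuous.intervalIntegrable (by fun_prop) _ _)
      (Continuous.intervalIntegrable (by fun_prop) _ _),
      intervalIntegral.integral_const_mul, intervalIntegral.integral_const_mul, ih (p + 1)] at h3
    simp only [one_pow, sub_self, ne_eq, Nat.add_eq_zero_iff, one_ne_zero, and_false,
      not_false_eq_true, zero_pow, mul_zero, sub_zero, zero_mul] at h3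
    rw [show p + (q + 1) + 1 = p + 1 + q + 1 by ring]
    have h4 : ((p : ℝ) + 1) ≠ 0 := by positivity
    have h5 : (p + 1 : ℝ) * ∫ s in (0 : ℝ)..1, s ^ p * (1 - s) ^ (q + 1) =
      (q + 1) * (((p + 1).factorial : ℝ) * q.factorial / (p + 1 + q + 1).factorial) := by linarith
    apply mul_left_cancel₀ h4
    rw [h5, Nat.factorial_succ p, Nat.factorial_succ q]
    push_cast
    ring

/-- key coefficient identity -/
lemma tb_coef (a b c j : ℕ) (hj : j ≤ b) :
    ((b.choose j : ℕ) : ℝ) * (((a + j).factorial * c.factorial : ℝ) / (a + j + c + 1).factorial) =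
    ((a.factorial * b.factorial * c.factorial : ℝ) / (a + b + c + 1).factorial) *
      (((a + j).choose j * (a + b + c + 1).choose (b - j) : ℕ) : ℝ) := by
  rw [Nat.cast_mul, Nat.cast_choose ℝ hj, Nat.cast_choose ℝ (Nat.le_add_left j a),
    Nat.cast_choose ℝ (show b - j ≤ a + b + c + 1 by omega)]
  rw [show a + b + c + 1 - (b - j) = a + j + c + 1 by omega, show a + j - j = a by omega]
  have := Nat.factorial_ne_zero
  field_simp

lemma tb_I1 (a c : ℕ) (z : ℝ) : ∫ t in (0 : ℝ)..z, t ^ a * (1 - t) ^ a * (z - t) ^ c =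
    ((a.factorial * a.factorial * c.factorial : ℝ) / (2 * a + c + 1).factorial) *
      (z ^ (a + c + 1) * tbE a c z) := by
  have h := intervalIntegral.smul_integral_comp_mul_left (a := 0) (b := 1)
    (fun t : ℝ => t ^ a * (1 - t) ^ a * (z - t) ^ c) z
  rw [mul_zero, mul_one] at h
  rw [← h]
  have h2 : ∀ s : ℝ, (z * s) ^ a * (1 - z * s) ^ a * (z - z * s) ^ c =
      ∑ j ∈ range (a + 1), (z ^ (a + c) * ((-1) ^ j * z ^ j * (a.choose j : ℕ))) *
        (s ^ (a + j) * (1 - s) ^ c) := by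
    intro s
    have h3 : (1 - z * s) ^ a = ∑ j ∈ range (a + 1), (-(z * s)) ^ j * 1 ^ (a - j) * (a.choose j : ℕ) := by
      rw [← add_pow]; ring
    rw [h3, Finset.mul_sum, Finset.sum_mul]
    apply Finset.sum_congr rfl
    intro j _
    rw [show z - z * s = z * (1 - s) by ring, neg_eq_neg_one_mul]
    simp only [mul_pow, pow_add]
    ring
  simp only [h2]
  rw [intervalIntegral.integral_finsetSum
    (fun j _ => Continuous.intervalIntegrable (by fun_prop) _ _)]
  simp only [intervalIntegral.integral_const_mul, tb_beta]
  rw [tbE, smul_eq_mul, Finset.mul_sum, Finset.mul_sum, Finset.mul_sum]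
  apply Finset.sum_congr rfl
  intro j hj
  have hj' : j ≤ a := by simpa [Nat.lt_succ_iff] using hj
  have h4 := tb_coef a a c j hj'
  rw [show a + a + c + 1 = 2 * a + c + 1 by ring] at h4
  linear_combination (z ^ (a + c + 1) * ((-1) ^ j * z ^ j)) * h4

lemma tb_I3 (a c : ℕ) (z : ℝ) : ∫ t in (0 : ℝ)..1, t ^ a * (1 - t) ^ a * (z - t) ^ c =
    ((a.factorial * a.factorial * c.factorial : ℝ) / (2 * a + c + 1).factorial) * tbB a c z := by
  have h2 : ∀ s : ℝ, s ^ a * (1 - s) ^ a * (z - s) ^ c =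
      ∑ j ∈ range (c + 1), (((-1) ^ j * z ^ (c - j) * (c.choose j : ℕ))) *
        (s ^ (a + j) * (1 - s) ^ a) := by
    intro s
    have h3 : (z - s) ^ c = ∑ j ∈ range (c + 1), (-s) ^ j * z ^ (c - j) * (c.choose j : ℕ) := by
      rw [← add_pow]; ring
    rw [h3, Finset.mul_sum]
    apply Finset.sum_congr rfl
    intro j _
    rw [neg_eq_neg_one_mul]
    simp only [mul_pow, pow_add]
    ring
  simp only [h2]
  rw [intervalIntegral.integral_finsetSum
    (fun j _ => Continuous.intervalIntegrable (by fun_prop) _ _)]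
  simp only [intervalIntegral.integral_const_mul, tb_beta]
  rw [tbB, Finset.mul_sum]
  apply Finset.sum_congr rfl
  intro j hj
  have hj' : j ≤ c := by simpa [Nat.lt_succ_iff] using hj
  have h4 := tb_coef a c a j hj'
  rw [show a + c + a + 1 = 2 * a + c + 1 by ring] at h4
  linear_combination ((-1) ^ j * z ^ (c - j)) * h4

lemma tb_pade_real (a c : ℕ) (z : ℝ) :
    z ^ (a + c + 1) * tbE a c z + (-1) ^ c * ((1 - z) ^ (a + c + 1) * tbE a c (1 - z)) = tbB a c z := by
  have h1 := tb_I1 a c z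
  have h2 := tb_I1 a c (1 - z)
  have h3 := tb_I3 a c z
  have h4 := intervalIntegral.integral_comp_sub_left (a := 0) (b := 1 - z)
    (fun t : ℝ => t ^ a * (1 - t) ^ a * (z - t) ^ c) 1
  rw [sub_zero, sub_sub_cancel] at h4
  have h5 : ∀ t : ℝ, (1 - t) ^ a * (1 - (1 - t)) ^ a * (z - (1 - t)) ^ c =
      (-1) ^ c * (t ^ a * (1 - t) ^ a * (1 - z - t) ^ c) := by
    intro t
    rw [show z - (1 - t) = -1 * (1 - z - t) by ring, mul_pow]
    ring
  simp only [h5, intervalIntegral.integral_const_mul] at h4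
  have h6 := intervalIntegral.integral_add_adjacent_intervals
    (Continuous.intervalIntegrable (u := (fun t : ℝ => t ^ a * (1 - t) ^ a * (z - t) ^ c))
      (μ := MeasureTheory.volume) (by fun_prop) 0 z)
    (Continuous.intervalIntegrable (u := (fun t : ℝ => t ^ a * (1 - t) ^ a * (z - t) ^ c))
      (μ := MeasureTheory.volume) (by fun_prop) z 1)
  rw [← h4, h1, h2, h3] at h6
  have h7 : ((a.factorial * a.factorial * c.factorial : ℝ) / (2 * a + c + 1).factorial) ≠ 0 := by
    have := Nat.factorial_ne_zero
    positivity
  apply mul_left_cancel₀ h7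
  linear_combination h6

lemma tb_pade_int (a c : ℕ) :
    (Polynomial.X : Polynomial ℤ) ^ (a + c + 1) * tbE a c Polynomial.X +
      (-1) ^ c * ((1 - Polynomial.X) ^ (a + c + 1) * tbE a c (1 - Polynomial.X)) =
      tbB a c Polynomial.X := by
  apply Polynomial.map_injective (Int.castRingHom ℝ) Int.cast_injective
  apply Polynomial.funext
  intro z
  set f : Polynomial ℤ →+* ℝ := (Polynomial.evalRingHom z).comp
    (Polynomial.mapRingHom (Int.castRingHom ℝ)) with hf
  have hX : f Polynomial.X = z := by simp [hf]
  change f _ = f _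
  simp only [map_add, map_mul, map_pow, map_neg, map_one, map_sub, tbE_map, tbB_map, hX]
  exact tb_pade_real a c z

lemma tb_pade {R : Type*} [CommRing R] (a c : ℕ) (z : R) :
    z ^ (a + c + 1) * tbE a c z + (-1) ^ c * ((1 - z) ^ (a + c + 1) * tbE a c (1 - z)) = tbB a c z := by
  have h := congrArg (Polynomial.eval₂RingHom (Int.castRingHom R) z) (tb_pade_int a c)
  simpa only [map_add, map_mul, map_pow, map_neg, map_one, map_sub, tbE_map, tbB_map,
    Polynomial.coe_eval₂RingHom, Polynomial.eval₂_X] using h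

end tbPade
section tbPadeBounds

open Finset Height

lemma tbE_eq (a c : ℕ) : (tbE a c Polynomial.X : Polynomial ℤ) = ∑ j ∈ range (a + 1),
    Polynomial.C ((-1) ^ j * (((a + j).choose j * (2 * a + c + 1).choose (a - j) : ℕ) : ℤ)) *
      Polynomial.X ^ j := by
  rw [tbE]
  apply Finset.sum_congr rfl
  intro j _
  simp

lemma tbB_eq (a c : ℕ) : (tbB a c Polynomial.X : Polynomial ℤ) = ∑ j ∈ range (c + 1),
    Polynomial.C ((-1) ^ j * (((a + j).choose j * (2 * a + c + 1).choose (c - j) : ℕ) : ℤ)) *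
      Polynomial.X ^ (c - j) := by
  rw [tbB]
  apply Finset.sum_congr rfl
  intro j _
  simp

lemma tbE_natDegree (a c : ℕ) : (tbE a c Polynomial.X : Polynomial ℤ).natDegree ≤ a := by
  rw [tbE_eq]
  apply Polynomial.natDegree_sum_le_of_forall_le
  intro j hj
  refine (Polynomial.natDegree_C_mul_X_pow_le _ _).trans ?_
  simp at hj; omega

lemma tbB_natDegree (a c : ℕ) : (tbB a c Polynomial.X : Polynomial ℤ).natDegree ≤ c := by
  rw [tbB_eq]
  apply Polynomial.natDegree_sum_le_of_forall_le
  intro j hj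
  refine (Polynomial.natDegree_C_mul_X_pow_le _ _).trans ?_
  omega

lemma tbE_coeff (a c : ℕ) : (tbE a c Polynomial.X : Polynomial ℤ).coeff a ≠ 0 := by
  rw [tbE_eq, Polynomial.finset_sum_coeff]
  simp only [Polynomial.coeff_C_mul_X_pow]
  rw [Finset.sum_eq_single a]
  · simp
    exact (Nat.choose_pos (Nat.le_add_left a a)).ne'
  · intro j _ hj; rw [if_neg (Ne.symm hj)]
  · intro h; simp at h

lemma tbB_coeff (a c : ℕ) : (tbB a c Polynomial.X : Polynomial ℤ).coeff c ≠ 0 := by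
  rw [tbB_eq, Polynomial.finset_sum_coeff]
  simp only [Polynomial.coeff_C_mul_X_pow]
  rw [Finset.sum_eq_single 0]
  · simp
    exact (Nat.choose_pos (by omega)).ne'
  · intro j h1 hj; rw [if_neg]; simp at h1; omega
  · intro h; simp at h

lemma tb_nondeg (k : ℕ) : ∃ κ : ℤ, κ ≠ 0 ∧
    (tbE (k + 1) (k + 1) Polynomial.X : Polynomial ℤ) *
      ((-1) ^ (k + 2) * tbE k (k + 2) (1 - Polynomial.X)) -
    tbE k (k + 2) Polynomial.X * ((-1) ^ (k + 1) * tbE (k + 1) (k + 1) (1 - Polynomial.X)) =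
      Polynomial.C κ := by
  set A : Polynomial ℤ := tbE (k + 1) (k + 1) Polynomial.X with hA
  set A' : Polynomial ℤ := tbE k (k + 2) Polynomial.X with hA'
  set B : Polynomial ℤ := tbB (k + 1) (k + 1) Polynomial.X with hB
  set B' : Polynomial ℤ := tbB k (k + 2) Polynomial.X with hB'
  set Δ := A * ((-1) ^ (k + 2) * tbE k (k + 2) (1 - Polynomial.X)) -
    A' * ((-1) ^ (k + 1) * tbE (k + 1) (k + 1) (1 - Polynomial.X)) with hΔ
  have h1 := tb_pade_int (k + 1) (k + 1)
  have h2 := tb_pade_int k (k + 2)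
  rw [show k + 1 + (k + 1) + 1 = 2 * k + 3 by ring] at h1
  rw [show k + (k + 2) + 1 = 2 * k + 3 by ring] at h2
  rw [← hA, ← hB] at h1
  rw [← hA', ← hB'] at h2
  have h3 : A * B' - A' * B = (1 - Polynomial.X) ^ (2 * k + 3) * Δ := by
    rw [hΔ]
    linear_combination A' * h1 - A * h2
  have hc : (A * B' - A' * B).coeff (2 * k + 3) ≠ 0 := by
    rw [Polynomial.coeff_sub, show 2 * k + 3 = (k + 1) + (k + 2) by ring,
      Polynomial.coeff_mul_add_eq_of_natDegree_le (tbE_natDegree _ _) (tbB_natDegree _ _),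
      Polynomial.coeff_eq_zero_of_natDegree_lt (p := A' * B), sub_zero]
    · exact mul_ne_zero (tbE_coeff _ _) (tbB_coeff _ _)
    · refine (Polynomial.natDegree_mul_le_of_le (tbE_natDegree _ _) (tbB_natDegree _ _)).trans_lt ?_
      omega
  have hd : (A * B' - A' * B).natDegree ≤ 2 * k + 3 := by
    refine (Polynomial.natDegree_sub_le _ _).trans (max_le ?_ ?_)
    · refine (Polynomial.natDegree_mul_le_of_le (tbE_natDegree _ _) (tbB_natDegree _ _)).trans ?_
      omega
    · refine (Polynomial.natDegree_mul_le_of_le (tbE_natDegree _ _) (tbB_natDegree _ _)).trans ?_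
      omega
  have hne : A * B' - A' * B ≠ 0 := by intro h; rw [h] at hc; simp at hc
  rw [h3] at hd hne
  have hΔ0 : Δ ≠ 0 := right_ne_zero_of_mul hne
  have h1X : (1 - Polynomial.X : Polynomial ℤ).natDegree = 1 := by
    have : (1 - Polynomial.X : Polynomial ℤ) = -(Polynomial.X - Polynomial.C 1) := by simp
    rw [this, Polynomial.natDegree_neg, Polynomial.natDegree_X_sub_C]
  rw [Polynomial.natDegree_mul (left_ne_zero_of_mul hne) hΔ0, Polynomial.natDegree_pow, h1X] at hd
  have h4 := Polynomial.eq_C_of_natDegree_le_zero (p := Δ) (by omega)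
  refine ⟨Δ.coeff 0, ?_, h4⟩
  intro h0; rw [h0] at h4; simp at h4; exact hΔ0 h4

variable {K : Type*} [Field K] [NumberField K]

lemma tb_nondeg_field (k : ℕ) (z : K) :
    (tbE (k + 1) (k + 1) z) * ((-1) ^ (k + 2) * tbE k (k + 2) (1 - z)) -
    tbE k (k + 2) z * ((-1) ^ (k + 1) * tbE (k + 1) (k + 1) (1 - z)) ≠ 0 := by
  obtain ⟨κ, hκ, h⟩ := tb_nondeg k
  have h := congrArg (Polynomial.eval₂RingHom (Int.castRingHom K) z) h
  simp only [map_add, map_mul, map_pow, map_neg, map_one, map_sub, tbE_map, tbB_map,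
    Polynomial.coe_eval₂RingHom, Polynomial.eval₂_X, Polynomial.eval₂_C] at h
  rw [h]
  simpa using hκ

lemma tb_choose_sum (n a : ℕ) (h : a ≤ n) : ∑ j ∈ range (a + 1), n.choose (a - j) ≤ 2 ^ n := by
  have h1 := Finset.sum_flip (n := a) (fun j => n.choose j)
  rw [h1, ← Nat.sum_range_choose]
  apply Finset.sum_le_sum_of_subset
  intro i hi; simp at hi ⊢; omega

lemma tb_inf_sum {ι : Type*} (v : InfinitePlace K) (s : Finset ι) (f : ι → K) :
    v (∑ i ∈ s, f i) ≤ ∑ i ∈ s, v (f i) := by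
  induction s using Finset.induction_on with
  | empty => simp
  | insert i s hi ih =>
    rw [Finset.sum_insert hi, Finset.sum_insert hi]
    exact (tb_inf_add v _ _).trans (by linarith)

lemma tb_fin_sum {ι : Type*} (v : FinitePlace K) (s : Finset ι) (f : ι → K) (B : ℝ) (hB : 0 ≤ B)
    (h : ∀ i ∈ s, v (f i) ≤ B) : v (∑ i ∈ s, f i) ≤ B := by
  induction s using Finset.induction_on with
  | empty => simpa
  | insert i s hi ih =>
    rw [Finset.sum_insert hi]
    refine (FinitePlace.add_le v _ _).trans (max_le (h i (by simp)) (ih ?_))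
    intro j hj; exact h j (by simp [hj])

lemma tb_fin_nat (v : FinitePlace K) (n : ℕ) : v (n : K) ≤ 1 := by
  induction n with
  | zero => simp
  | succ n ih =>
    push_cast
    exact (FinitePlace.add_le v _ _).trans (max_le ih (by simp))

lemma tb_inf_nat (v : InfinitePlace K) (n : ℕ) : v (n : K) = n := by
  rw [← InfinitePlace.norm_embedding_eq]; simp

lemma tb_inf_neg (v : InfinitePlace K) (x : K) : v (-x) = v x := v.1.map_neg x

lemma tb_inf_sgn (v : InfinitePlace K) (j : ℕ) : v ((-1) ^ j) = 1 := by
  rw [map_pow, tb_inf_neg, map_one, one_pow]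

lemma tb_fin_sgn (v : FinitePlace K) (j : ℕ) : v ((-1) ^ j) = 1 := by
  rw [map_pow, map_neg_eq_map, map_one, one_pow]

lemma tbE_inf (v : InfinitePlace K) (a c : ℕ) (z : K) {M : ℝ} (h1 : 1 ≤ M) (hz : v z ≤ M) :
    v (tbE a c z) ≤ 2 ^ (4 * a + c + 1) * M ^ a := by
  rw [tbE]
  refine (tb_inf_sum v _ _).trans ?_
  have h2 : ∀ j ∈ range (a + 1), v ((-1) ^ j * (((a + j).choose j * (2 * a + c + 1).choose (a - j) : ℕ) : K)
      * z ^ j) ≤ 2 ^ (2 * a) * M ^ a * (((2 * a + c + 1).choose (a - j) : ℕ) : ℝ) := by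
    intro j hj
    have hj' : j ≤ a := by simp at hj; omega
    rw [map_mul, map_mul, tb_inf_sgn, tb_inf_nat, one_mul, map_pow]
    have h3 : ((a + j).choose j : ℝ) ≤ 2 ^ (2 * a) := by
      have h4 : (a + j).choose j ≤ 2 ^ (2 * a) := (Nat.choose_le_two_pow _ _).trans
        (Nat.pow_le_pow_right (by norm_num) (by omega))
      exact_mod_cast h4
    have h5 : v z ^ j ≤ M ^ a := (pow_le_pow_left₀ (apply_nonneg v _) hz j).trans
      (pow_le_pow_right₀ h1 hj')
    push_cast
    calc ((a + j).choose j : ℝ) * ((2 * a + c + 1).choose (a - j) : ℝ) * v z ^ j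
        ≤ 2 ^ (2 * a) * ((2 * a + c + 1).choose (a - j) : ℝ) * M ^ a := by gcongr
      _ = _ := by ring
  refine (Finset.sum_le_sum h2).trans ?_
  rw [← Finset.mul_sum]
  have h6 : ((∑ j ∈ range (a + 1), (2 * a + c + 1).choose (a - j) : ℕ) : ℝ) ≤ 2 ^ (2 * a + c + 1) := by
    exact_mod_cast tb_choose_sum (2 * a + c + 1) a (by omega)
  rw [← Nat.cast_sum]
  calc _ ≤ 2 ^ (2 * a) * M ^ a * 2 ^ (2 * a + c + 1) := by gcongr
    _ = _ := by ring

lemma tbB_inf (v : InfinitePlace K) (a c : ℕ) (z : K) {M : ℝ} (h1 : 1 ≤ M) (hz : v z ≤ M) :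
    v (tbB a c z) ≤ 2 ^ (3 * a + 2 * c + 1) * M ^ c := by
  rw [tbB]
  refine (tb_inf_sum v _ _).trans ?_
  have h2 : ∀ j ∈ range (c + 1), v ((-1) ^ j * (((a + j).choose j * (2 * a + c + 1).choose (c - j) : ℕ) : K)
      * z ^ (c - j)) ≤ 2 ^ (a + c) * M ^ c * (((2 * a + c + 1).choose (c - j) : ℕ) : ℝ) := by
    intro j hj
    have hj' : j ≤ c := by simp at hj; omega
    rw [map_mul, map_mul, tb_inf_sgn, tb_inf_nat, one_mul, map_pow]
    have h3 : ((a + j).choose j : ℝ) ≤ 2 ^ (a + c) := by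
      have h4 : (a + j).choose j ≤ 2 ^ (a + c) := (Nat.choose_le_two_pow _ _).trans
        (Nat.pow_le_pow_right (by norm_num) (by omega))
      exact_mod_cast h4
    have h5 : v z ^ (c - j) ≤ M ^ c := (pow_le_pow_left₀ (apply_nonneg v _) hz _).trans
      (pow_le_pow_right₀ h1 (by omega))
    push_cast
    calc ((a + j).choose j : ℝ) * ((2 * a + c + 1).choose (c - j) : ℝ) * v z ^ (c - j)
        ≤ 2 ^ (a + c) * ((2 * a + c + 1).choose (c - j) : ℝ) * M ^ c := by gcongr
      _ = _ := by ring
  refine (Finset.sum_le_sum h2).trans ?_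
  rw [← Finset.mul_sum]
  have h6 : ((∑ j ∈ range (c + 1), (2 * a + c + 1).choose (c - j) : ℕ) : ℝ) ≤ 2 ^ (2 * a + c + 1) := by
    exact_mod_cast tb_choose_sum (2 * a + c + 1) c (by omega)
  rw [← Nat.cast_sum]
  calc _ ≤ 2 ^ (a + c) * M ^ c * 2 ^ (2 * a + c + 1) := by gcongr
    _ = _ := by ring

lemma tbE_fin (v : FinitePlace K) (a c : ℕ) (z : K) {M : ℝ} (h1 : 1 ≤ M) (hz : v z ≤ M) :
    v (tbE a c z) ≤ M ^ a := by
  rw [tbE]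
  apply tb_fin_sum v _ _ _ (by positivity)
  intro j hj
  rw [map_mul, map_mul, tb_fin_sgn, one_mul, map_pow]
  have h5 : v z ^ j ≤ M ^ a := (pow_le_pow_left₀ (apply_nonneg v _) hz j).trans
      (pow_le_pow_right₀ h1 (by simp at hj; omega))
  calc _ ≤ 1 * M ^ a := mul_le_mul (tb_fin_nat v _) h5 (by positivity) zero_le_one
    _ = _ := one_mul _

lemma tbB_fin (v : FinitePlace K) (a c : ℕ) (z : K) {M : ℝ} (h1 : 1 ≤ M) (hz : v z ≤ M) :
    v (tbB a c z) ≤ M ^ c := by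
  rw [tbB]
  apply tb_fin_sum v _ _ _ (by positivity)
  intro j hj
  rw [map_mul, map_mul, tb_fin_sgn, one_mul, map_pow]
  have h5 : v z ^ (c - j) ≤ M ^ c := (pow_le_pow_left₀ (apply_nonneg v _) hz _).trans
      (pow_le_pow_right₀ h1 (by omega))
  calc _ ≤ 1 * M ^ c := mul_le_mul (tb_fin_nat v _) h5 (by positivity) zero_le_one
    _ = _ := one_mul _

/-- bound for one Pade vector -/
lemma tb_pade_height (m a c : ℕ) (ha : a ≤ m) (hc : c ≤ m + 1) (hac : a + c = 2 * m) (z : K)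
    (hr : ![tbE a c z, (-1) ^ c * tbE a c (1 - z), - tbB a c z] ≠ 0) :
    logHeight ![tbE a c z, (-1) ^ c * tbE a c (1 - z), - tbB a c z] ≤
      (m + 1) * logHeight₁ z + totalWeight K * ((6 * m + 1) * Real.log 2) := by
  have key := tb_mulHeight_le hr (B := 2 ^ (6 * m + 1)) (by positivity) z 0 (m + 1) 0 ?_ ?_
  · rw [Real.log_pow] at key
    push_cast at key
    simpa using key
  · intro v i
    have hM : (1 : ℝ) ≤ max (v z) 1 := le_max_right _ _
    have hz : v z ≤ max (v z) 1 := le_max_left _ _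
    set M := max (v z) 1 with hMdef
    rw [pow_zero, mul_one]
    fin_cases i
    · change v (tbE a c z) ≤ _
      refine (tbE_inf v a c z hM hz).trans ?_
      have h1 : (2 : ℝ) ^ (4 * a + c + 1) ≤ 2 ^ (6 * m + 1) :=
        pow_le_pow_right₀ (by norm_num) (by omega)
      have h2 : M ^ a ≤ M ^ (m + 1) := pow_le_pow_right₀ hM (by omega)
      gcongr
    · change v ((-1) ^ c * tbE a c (1 - z)) ≤ _
      rw [map_mul, tb_inf_sgn, one_mul]
      refine (tbE_inf v a c (1 - z) (M := 2 * M) (by linarith) ?_).trans ?_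
      · refine (tb_inf_sub v _ _).trans ?_
        rw [map_one]; linarith
      · rw [mul_pow, ← mul_assoc, ← pow_add]
        have h1 : (2 : ℝ) ^ (4 * a + c + 1 + a) ≤ 2 ^ (6 * m + 1) :=
          pow_le_pow_right₀ (by norm_num) (by omega)
        have h2 : M ^ a ≤ M ^ (m + 1) := pow_le_pow_right₀ hM (by omega)
        gcongr
    · change v (- tbB a c z) ≤ _
      rw [tb_inf_neg]
      refine (tbB_inf v a c z hM hz).trans ?_
      have h1 : (2 : ℝ) ^ (3 * a + 2 * c + 1) ≤ 2 ^ (6 * m + 1) :=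
        pow_le_pow_right₀ (by norm_num) (by omega)
      have h2 : M ^ c ≤ M ^ (m + 1) := pow_le_pow_right₀ hM (by omega)
      gcongr
  · intro v i
    have hM : (1 : ℝ) ≤ max (v z) 1 := le_max_right _ _
    have hz : v z ≤ max (v z) 1 := le_max_left _ _
    set M := max (v z) 1 with hMdef
    rw [pow_zero, mul_one]
    have h2 : M ^ a ≤ M ^ (m + 1) := pow_le_pow_right₀ hM (by omega)
    have h3 : M ^ c ≤ M ^ (m + 1) := pow_le_pow_right₀ hM (by omega)
    fin_cases i
    · exact (tbE_fin v a c z hM hz).trans h2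
    · change v ((-1) ^ c * tbE a c (1 - z)) ≤ _
      rw [map_mul, tb_fin_sgn, one_mul]
      refine (tbE_fin v a c (1 - z) (M := M) hM ?_).trans h2
      rw [sub_eq_add_neg]
      refine (FinitePlace.add_le v _ _).trans (max_le (by simpa using hM) ?_)
      rw [map_neg_eq_map]; exact hz
    · change v (- tbB a c z) ≤ _
      rw [map_neg_eq_map]
      exact (tbB_fin v a c z hM hz).trans h3

/-- The Pade gap principle. -/
lemma tb_pade_main (k : ℕ) (z X Y : K) (hY : Y ≠ 0)
    (h : X * z ^ (2 * k + 3) + Y * (1 - z) ^ (2 * k + 3) = 1) :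
    (2 * k + 3) * logHeight₁ z ≤ (k + 2) * logHeight₁ z + logHeight₁ X + logHeight₁ Y +
      totalWeight K * ((6 * k + 8) * Real.log 2) := by
  set e : Fin 3 → K := ![z ^ (2 * k + 3), (1 - z) ^ (2 * k + 3), 1] with he
  set r' : Fin 3 → K := ![X, Y, -1] with hr'
  have main : ∀ a c : ℕ, a ≤ k + 1 → c ≤ k + 2 → a + c = 2 * (k + 1) →
      tbE a c z * Y - ((-1) ^ c * tbE a c (1 - z)) * X ≠ 0 →
      (2 * k + 3) * logHeight₁ z ≤ (k + 2) * logHeight₁ z + logHeight₁ X + logHeight₁ Y +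
      totalWeight K * ((6 * k + 8) * Real.log 2) := by
    intro a c ha hc hac hne
    set r : Fin 3 → K := ![tbE a c z, (-1) ^ c * tbE a c (1 - z), - tbB a c z] with hr
    have hr0 : r ≠ 0 := by
      intro h0
      have h1 : tbE a c z = 0 := congrFun h0 0
      have h2 : (-1) ^ c * tbE a c (1 - z) = 0 := congrFun h0 1
      apply hne; rw [h1, h2]; ring
    have hp := tb_pade a c z
    rw [show a + c + 1 = 2 * k + 3 by omega] at hp
    have h1 := tb_cross (e := e) (r := r) (r' := r') (by intro h0; simpa [he] using congrFun h0 2)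
      (by simp [he, hr]; linear_combination hp)
      (by simp [he, hr']; linear_combination h)
      (by rintro ⟨_, _, h3⟩; exact hne h3)
    have h2 := tb_pade_height (k + 1) a c ha hc hac z hr0
    have h3 : logHeight r' ≤ logHeight₁ X + logHeight₁ Y + totalWeight K * Real.log 1 := by
      have := tb_mulHeight_le (r := r') (by intro h0; simpa [hr'] using congrFun h0 2) (B := 1)
        one_pos X Y 1 1 ?_ ?_
      · simpa using this
      · intro v i
        have h1 := le_max_right (v X) 1
        have h1' := le_max_right (v Y) 1
        have h2 := le_max_left (v X) 1
        have h2' := le_max_left (v Y) 1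
        have h3 : v (-1) = 1 := by rw [tb_inf_neg, map_one]
        fin_cases i
        · change v X ≤ _
          rw [pow_one, pow_one, one_mul]; nlinarith
        · change v Y ≤ _
          rw [pow_one, pow_one, one_mul]; nlinarith
        · change v (-1) ≤ _
          rw [pow_one, pow_one, one_mul]; nlinarith
      · intro v i
        have h1 := le_max_right (v X) 1
        have h1' := le_max_right (v Y) 1
        have h2 := le_max_left (v X) 1
        have h2' := le_max_left (v Y) 1
        have h3 : v (-1) = 1 := by rw [map_neg_eq_map, map_one]
        fin_cases i
        · change v X ≤ _
          rw [pow_one, pow_one]; nlinarith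
        · change v Y ≤ _
          rw [pow_one, pow_one]; nlinarith
        · change v (-1) ≤ _
          rw [pow_one, pow_one]; nlinarith
    have h4 : (2 * k + 3) * logHeight₁ z ≤ logHeight e := by
      have h5 := logHeight_comp_le (K := K) (![0, 2] : Fin 2 → Fin 3) e
      have h6 : e ∘ (![0, 2] : Fin 2 → Fin 3) = ![z ^ (2 * k + 3), 1] := by
        ext i; fin_cases i <;> simp [he]
      rw [h6, ← logHeight₁_eq_logHeight, logHeight₁_pow] at h5
      push_cast at h5
      exact h5
    rw [Real.log_one] at h3
    push_cast at h2
    nlinarith [h1, h2, h3, h4]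
  by_cases h1 : tbE (k + 1) (k + 1) z * Y - ((-1) ^ (k + 1) * tbE (k + 1) (k + 1) (1 - z)) * X = 0
  · by_cases h2 : tbE k (k + 2) z * Y - ((-1) ^ (k + 2) * tbE k (k + 2) (1 - z)) * X = 0
    · exfalso
      have h3 := tb_nondeg_field k z
      have hX : Y * (tbE (k + 1) (k + 1) z * ((-1) ^ (k + 2) * tbE k (k + 2) (1 - z)) -
          tbE k (k + 2) z * ((-1) ^ (k + 1) * tbE (k + 1) (k + 1) (1 - z))) = 0 := by
        linear_combination ((-1) ^ (k + 2) * tbE k (k + 2) (1 - z)) * h1 -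
          ((-1) ^ (k + 1) * tbE (k + 1) (k + 1) (1 - z)) * h2
      exact (mul_ne_zero hY h3) hX
    · exact main k (k + 2) (by omega) (by omega) (by omega) h2
  · exact main (k + 1) (k + 1) (by omega) (by omega) (by omega) h1

end tbPadeBounds
/-! ### The unit lemma -/

section tbUnit

open Finset Height

variable {K : Type*} [Field K] [NumberField K]

/-- solutions of the twisted unit equation -/
def tbSol (T : Finset (HeightOneSpectrum (𝓞 K))) (c : K) (r : HeightOneSpectrum (𝓞 K) → ℝ)
    (p : K × K) : Prop :=
  p.1 ≠ 0 ∧ p.2 ≠ 0 ∧ (1 - p.1) * (1 - p.2) = c ∧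
    ∀ q ∉ T, FinitePlace.mk q p.1 = 1 ∧ FinitePlace.mk q p.2 ≤ 1 ∧ FinitePlace.mk q p.2 = r q

lemma tb_eq_of_fst {c : K} (hc : c ≠ 0) {p q : K × K} (hp : (1 - p.1) * (1 - p.2) = c)
    (hq : (1 - q.1) * (1 - q.2) = c) (h : p.1 = q.1) : p = q := by
  refine Prod.ext h ?_
  have h1 : 1 - p.1 ≠ 0 := by intro h0; rw [h0, zero_mul] at hp; exact hc hp.symm
  rw [← h, ← hp] at hq
  have := mul_left_cancel₀ h1 hq
  linear_combination this

lemma tb_eq_of_snd {c : K} (hc : c ≠ 0) {p q : K × K} (hp : (1 - p.1) * (1 - p.2) = c)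
    (hq : (1 - q.1) * (1 - q.2) = c) (h : p.2 = q.2) : p = q := by
  refine Prod.ext ?_ h
  have h1 : 1 - p.2 ≠ 0 := by intro h0; rw [h0, mul_zero] at hp; exact hc hp.symm
  rw [← h, ← hp] at hq
  have := mul_right_cancel₀ h1 hq
  linear_combination this

lemma tb_vec_height (x y : K) (hx : x ≠ 1) :
    logHeight ![x - 1, y - 1, 1 - x * y] ≤ logHeight₁ x + logHeight₁ y + totalWeight K * Real.log 2 := by
  have := tb_mulHeight_le (r := ![x - 1, y - 1, 1 - x * y])
    (by intro h0; exact hx (sub_eq_zero.mp (congrFun h0 0))) (B := 2) two_pos x y 1 1 ?_ ?_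
  · simpa using this
  · intro v i
    have h1 := le_max_right (v x) 1
    have h1' := le_max_right (v y) 1
    have h2 := le_max_left (v x) 1
    have h2' := le_max_left (v y) 1
    have hx0 := apply_nonneg v x
    have hy0 := apply_nonneg v y
    rw [pow_one, pow_one]
    fin_cases i
    · change v (x - 1) ≤ _
      refine (tb_inf_sub v _ _).trans ?_
      rw [map_one]; nlinarith
    · change v (y - 1) ≤ _
      refine (tb_inf_sub v _ _).trans ?_
      rw [map_one]; nlinarith
    · change v (1 - x * y) ≤ _
      refine (tb_inf_sub v _ _).trans ?_
      rw [map_one, map_mul]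
      have : v x * v y ≤ max (v x) 1 * max (v y) 1 := mul_le_mul h2 h2' hy0 (by positivity)
      nlinarith
  · intro v i
    have h1 := le_max_right (v x) 1
    have h1' := le_max_right (v y) 1
    have h2 := le_max_left (v x) 1
    have h2' := le_max_left (v y) 1
    have hx0 := apply_nonneg v x
    have hy0 := apply_nonneg v y
    rw [pow_one, pow_one]
    fin_cases i
    · change v (x - 1) ≤ _
      rw [sub_eq_add_neg]
      refine (FinitePlace.add_le v _ _).trans (max_le ?_ ?_)
      · nlinarith
      · rw [map_neg_eq_map, map_one]; nlinarith
    · change v (y - 1) ≤ _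
      rw [sub_eq_add_neg]
      refine (FinitePlace.add_le v _ _).trans (max_le ?_ ?_)
      · nlinarith
      · rw [map_neg_eq_map, map_one]; nlinarith
    · change v (1 - x * y) ≤ _
      rw [sub_eq_add_neg]
      refine (FinitePlace.add_le v _ _).trans (max_le ?_ ?_)
      · rw [map_one]; nlinarith
      · rw [map_neg_eq_map, map_mul]
        exact mul_le_mul h2 h2' hy0 (by positivity)

lemma tb_gap {c : K} (hc : c ≠ 0) (p0 p1 p2 : K × K)
    (h0 : (1 - p0.1) * (1 - p0.2) = c) (h1 : (1 - p1.1) * (1 - p1.2) = c)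
    (h2 : (1 - p2.1) * (1 - p2.2) = c) (hu : p0.1 ≠ 0) (hw : p0.2 ≠ 0)
    (h01 : p0 ≠ p1) (h02 : p0 ≠ p2) (h12 : p1 ≠ p2) :
    max (logHeight₁ p0.1) (logHeight₁ p0.2) ≤ logHeight₁ (p1.1 / p0.1) + logHeight₁ (p1.2 / p0.2) +
      logHeight₁ (p2.1 / p0.1) + logHeight₁ (p2.2 / p0.2) + 3 * (totalWeight K * Real.log 2) := by
  obtain ⟨u, w⟩ := p0
  simp only at *
  set x1 := p1.1 / u with hx1
  set y1 := p1.2 / w with hy1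
  set x2 := p2.1 / u with hx2
  set y2 := p2.2 / w with hy2
  have ex1 : p1.1 = u * x1 := by rw [hx1]; field_simp
  have ex2 : p2.1 = u * x2 := by rw [hx2]; field_simp
  have ey1 : p1.2 = w * y1 := by rw [hy1]; field_simp
  have ey2 : p2.2 = w * y2 := by rw [hy2]; field_simp
  have nx1 : x1 ≠ 1 := by
    intro h; apply h01; apply tb_eq_of_fst hc h0 h1; simp [ex1, h]
  have nx2 : x2 ≠ 1 := by
    intro h; apply h02; apply tb_eq_of_fst hc h0 h2; simp [ex2, h]
  have ny12 : y1 ≠ y2 := by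
    intro h; apply h12; apply tb_eq_of_snd hc h1 h2; rw [ey1, ey2, h]
  rw [ex1, ey1] at h1
  rw [ex2, ey2] at h2
  have key := tb_cross (e := ![u, w, u * w]) (r := ![x1 - 1, y1 - 1, 1 - x1 * y1])
    (r' := ![x2 - 1, y2 - 1, 1 - x2 * y2]) (by intro h; exact hu (congrFun h 0))
    (by simp; linear_combination h0 - h1) (by simp; linear_combination h0 - h2)
    (by
      rintro ⟨_, h3, h4⟩
      simp at h3 h4
      have h5 : (x1 - 1) * (x2 - 1) * (y2 - y1) = 0 := by linear_combination h3 - h4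
      have h6 := sub_ne_zero.mpr nx1
      have h7 := sub_ne_zero.mpr nx2
      have h8 := sub_ne_zero.mpr (Ne.symm ny12)
      exact (mul_ne_zero (mul_ne_zero h6 h7) h8) h5)
  have k1 := tb_vec_height x1 y1 nx1
  have k2 := tb_vec_height x2 y2 nx2
  have g1 : logHeight₁ u ≤ logHeight ![u, w, u * w] := by
    have h5 := logHeight_comp_le (K := K) (![2, 1] : Fin 2 → Fin 3) ![u, w, u * w]
    have h6 : ![u, w, u * w] ∘ (![2, 1] : Fin 2 → Fin 3) = ![u * w, w] := by
      ext i; fin_cases i <;> simp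
    rw [h6, ← logHeight₁_div_eq_logHeight, mul_div_cancel_right₀ _ hw] at h5
    exact h5
  have g2 : logHeight₁ w ≤ logHeight ![u, w, u * w] := by
    have h5 := logHeight_comp_le (K := K) (![2, 0] : Fin 2 → Fin 3) ![u, w, u * w]
    have h6 : ![u, w, u * w] ∘ (![2, 0] : Fin 2 → Fin 3) = ![u * w, u] := by
      ext i; fin_cases i <;> simp
    rw [h6, ← logHeight₁_div_eq_logHeight, mul_div_cancel_left₀ _ hu] at h5
    exact h5
  apply max_le <;> linarith

lemma tb_D_pos : (1 : ℝ) ≤ totalWeight K := by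
  rw [totalWeight_eq_sum_mult]
  have v : InfinitePlace K := Classical.arbitrary _
  have h1 : 1 ≤ ∑ v : InfinitePlace K, v.mult :=
    (InfinitePlace.mult_pos (w := v)).trans_le
      (Finset.single_le_sum (f := fun v : InfinitePlace K => v.mult) (fun _ _ => Nat.zero_le _)
        (Finset.mem_univ v))
  exact_mod_cast h1

lemma tb_D_le : (totalWeight K : ℝ) ≤ 2 * Fintype.card (InfinitePlace K) := by
  rw [totalWeight_eq_sum_mult]
  have h1 : ∑ v : InfinitePlace K, v.mult ≤ ∑ v : InfinitePlace K, 2 := by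
    apply Finset.sum_le_sum
    intro v _
    rw [InfinitePlace.mult]; split_ifs <;> omega
  simp at h1
  have h2 : ((∑ v : InfinitePlace K, v.mult : ℕ) : ℝ) ≤ ((Fintype.card (InfinitePlace K) * 2 : ℕ) : ℝ) :=
    by exact_mod_cast h1
  push_cast at h2 ⊢
  linarith

lemma tb_log2 : Real.log 2 ≤ 0.7 := by linarith [Real.log_two_lt_d9]
lemma tb_log2' : 0 ≤ Real.log 2 := Real.log_nonneg (by norm_num)

lemma tbL_div (T : Finset (HeightOneSpectrum (𝓞 K))) {x y : K} (hx : x ≠ 0) (hy : y ≠ 0) (i) :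
    tbL T (x / y) i = tbL T x i - tbL T y i := by
  rcases i with v | q
  · simp only [tbL]
    rw [map_div₀, Real.log_div ((map_ne_zero v).mpr hx) ((map_ne_zero v).mpr hy)]; ring
  · simp only [tbL]
    rw [map_div₀, Real.log_div ((map_ne_zero _).mpr hx) ((map_ne_zero _).mpr hy)]

lemma tbL_pow (T : Finset (HeightOneSpectrum (𝓞 K))) (x : K) (n : ℕ) (i) :
    tbL T (x ^ n) i = n * tbL T x i := by
  rcases i with v | q
  · simp only [tbL]
    rw [map_pow, Real.log_pow]; ring
  · simp only [tbL]
    rw [map_pow, Real.log_pow]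

lemma tb_card (T : Finset (HeightOneSpectrum (𝓞 K))) :
    Fintype.card (InfinitePlace K ⊕ T) = T.card + Fintype.card (InfinitePlace K) := by
  rw [Fintype.card_sum, Fintype.card_coe, add_comm]

lemma tb_one_le_card : 1 ≤ Fintype.card (InfinitePlace K) := Fintype.card_pos

/-- II: solutions in a height window -/
lemma tb_II (T : Finset (HeightOneSpectrum (𝓞 K))) {c : K} (hc : c ≠ 0)
    (r : HeightOneSpectrum (𝓞 K) → ℝ) (E : Finset (K × K)) (hE : ∀ p ∈ E, tbSol T c r p)
    (X Λ : ℝ) (hX : 5 * totalWeight K ≤ X) (hΛ : 0 ≤ Λ)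
    (h1 : ∀ p ∈ E, X ≤ max (logHeight₁ p.1) (logHeight₁ p.2))
    (h2 : ∀ p ∈ E, max (logHeight₁ p.1) (logHeight₁ p.2) ≤ Λ * X) :
    (E.card : ℝ) ≤ 2 * (Real.exp 1 * (32 * Λ + 3)) ^ (2 * (T.card + Fintype.card (InfinitePlace K))) := by
  have hD := tb_D_pos (K := K)
  have hX0 : 0 < X := by linarith
  set s := T.card + Fintype.card (InfinitePlace K) with hs
  have hs1 : 1 ≤ s := by have := tb_one_le_card (K := K); omega
  have hs0 : (0 : ℝ) < s := by exact_mod_cast hs1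
  have hcard : Fintype.card ((InfinitePlace K ⊕ T) ⊕ (InfinitePlace K ⊕ T)) = 2 * s := by
    rw [Fintype.card_sum, tb_card, ← hs]; ring
  have key := tb_box (ι := (InfinitePlace K ⊕ T) ⊕ (InfinitePlace K ⊕ T)) E
    (fun p => Sum.elim (tbL T p.1) (tbL T p.2)) (4 * Λ * X / (2 * s)) (X / 4 / (2 * s)) 2
    (by positivity) (by positivity) (by norm_num) ?_ ?_
  · rw [hcard] at key
    convert key using 3
    field_simp
    ring
  · intro p hp
    rw [hcard, Fintype.sum_sum_type]
    simp only [Sum.elim_inl, Sum.elim_inr]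
    have h3 := tb_S_le T p.1
    have h4 := tb_S_le T p.2
    have h5 := h2 p hp
    have h6 := le_max_left (logHeight₁ p.1) (logHeight₁ p.2)
    have h7 := le_max_right (logHeight₁ p.1) (logHeight₁ p.2)
    have h8 : 4 * Λ * X / (2 * s) * ((2 * s : ℕ) : ℝ) = 4 * Λ * X := by
      push_cast; field_simp
    rw [h8]
    linarith
  · intro F hF hclose
    by_contra hcon
    push Not at hcon
    have hcon' : 2 < F.card := by exact_mod_cast hcon
    obtain ⟨p0, p1, p2, m0, m1, m2, n01, n02, n12⟩ := Finset.two_lt_card_iff.mp hcon'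
    have hsmall1 : ∀ p ∈ F, logHeight₁ (p.1 / p0.1) ≤ X / 8 := by
      intro p hp
      have q := hE p (hF hp)
      have q0 := hE p0 (hF m0)
      refine (tb_height_le T (p.1 / p0.1) 1 0 ?_).trans ?_
      · intro w hw
        rw [map_div₀, (q.2.2.2 w hw).1, (q0.2.2.2 w hw).1]; simp
      · have : ∑ i, |tbL T (p.1 / p0.1) i| ≤ ∑ i : InfinitePlace K ⊕ T, X / 4 / (2 * s) := by
          apply Finset.sum_le_sum
          intro i _
          rw [tbL_div T q.1 q0.1]
          exact hclose p hp p0 m0 (Sum.inl i)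
        rw [Finset.sum_const, Finset.card_univ, tb_card, ← hs, nsmul_eq_mul] at this
        have h9 : (s : ℝ) * (X / 4 / (2 * s)) = X / 8 := by field_simp; ring
        rw [h9] at this
        simpa using this
    have hsmall2 : ∀ p ∈ F, logHeight₁ (p.2 / p0.2) ≤ X / 8 := by
      intro p hp
      have q := hE p (hF hp)
      have q0 := hE p0 (hF m0)
      refine (tb_height_le T (p.2 / p0.2) 1 0 ?_).trans ?_
      · intro w hw
        rw [map_div₀, (q.2.2.2 w hw).2.2, (q0.2.2.2 w hw).2.2]
        rw [pow_zero]
        exact div_self_le_one _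
      · have : ∑ i, |tbL T (p.2 / p0.2) i| ≤ ∑ i : InfinitePlace K ⊕ T, X / 4 / (2 * s) := by
          apply Finset.sum_le_sum
          intro i _
          rw [tbL_div T q.2.1 q0.2.1]
          exact hclose p hp p0 m0 (Sum.inr i)
        rw [Finset.sum_const, Finset.card_univ, tb_card, ← hs, nsmul_eq_mul] at this
        have h9 : (s : ℝ) * (X / 4 / (2 * s)) = X / 8 := by field_simp; ring
        rw [h9] at this
        simpa using this
    have q0 := hE p0 (hF m0)
    have gap := tb_gap hc p0 p1 p2 q0.2.2.1 (hE p1 (hF m1)).2.2.1 (hE p2 (hF m2)).2.2.1 q0.1 q0.2.1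
      n01 n02 n12
    have a1 := hsmall1 p1 m1
    have a2 := hsmall1 p2 m2
    have a3 := hsmall2 p1 m1
    have a4 := hsmall2 p2 m2
    have a5 := h1 p0 (hF m0)
    have a6 : (totalWeight K : ℝ) * Real.log 2 ≤ totalWeight K * 0.7 :=
      mul_le_mul_of_nonneg_left tb_log2 (by linarith)
    linarith

/-- I: solutions of small height -/
lemma tb_Ismall {c : K} (hc : c ≠ 0) (E : Finset (K × K))
    (hE : ∀ p ∈ E, p.1 ≠ 0 ∧ (1 - p.1) * (1 - p.2) = c)
    (h1 : ∀ p ∈ E, logHeight₁ p.1 ≤ 5 * totalWeight K) :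
    (E.card : ℝ) ≤ (Real.exp 1 * (2 * (12 / Real.exp (-13) + 1) + 1)) ^
      (2 * Fintype.card (InfinitePlace K)) := by
  have hD := tb_D_pos (K := K)
  have hD2 := tb_D_le (K := K)
  have hcard : Fintype.card (InfinitePlace K ⊕ InfinitePlace K) = 2 * Fintype.card (InfinitePlace K) := by
    rw [Fintype.card_sum]; ring
  have key := tb_box (ι := InfinitePlace K ⊕ InfinitePlace K) E
    (fun p => Sum.elim (fun v => (Complex.log (v.embedding p.1)).re)
      (fun v => (Complex.log (v.embedding p.1)).im)) 12 (Real.exp (-13)) 1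
    (by norm_num) (by positivity) (by norm_num) ?_ ?_
  · rw [hcard, one_mul] at key
    exact key
  · intro p hp
    rw [hcard, Fintype.sum_sum_type]
    simp only [Sum.elim_inl, Sum.elim_inr]
    have h3 := tb_S_le ∅ p.1
    rw [tbL_sum, Finset.sum_empty, add_zero] at h3
    have h4 : ∑ v : InfinitePlace K, |(Complex.log (v.embedding p.1)).re| ≤
        ∑ v : InfinitePlace K, (v.mult : ℝ) * |Real.log (v p.1)| := by
      apply Finset.sum_le_sum
      intro v _
      rw [Complex.log_re, InfinitePlace.norm_embedding_eq]
      have h5 : (1 : ℝ) ≤ v.mult := by exact_mod_cast InfinitePlace.one_le_mult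
      nlinarith [abs_nonneg (Real.log (v p.1))]
    have h5 : ∑ v : InfinitePlace K, |(Complex.log (v.embedding p.1)).im| ≤
        ∑ v : InfinitePlace K, (4 : ℝ) := by
      apply Finset.sum_le_sum
      intro v _
      rw [Complex.log_im]
      exact (Complex.abs_arg_le_pi _).trans Real.pi_le_four
    rw [Finset.sum_const, Finset.card_univ, nsmul_eq_mul] at h5
    have h6 := h1 p hp
    push_cast
    linarith
  · intro F hF hclose
    have : F.card ≤ 1 := by
      rw [Finset.card_le_one]
      intro p hp q hq
      by_contra hpq
      have ep := hE p (hF hp)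
      have eq' := hE q (hF hq)
      have hne : p.1 / q.1 ≠ 1 := by
        intro h
        rw [div_eq_one_iff_eq eq'.1] at h
        exact hpq (tb_eq_of_fst hc ep.2 eq'.2 h)
      have hr := tb_repel hne (t := 11) ?_
      · have h3 := logHeight₁_mul_le p.1 (q.1)⁻¹
        rw [logHeight₁_inv, ← div_eq_mul_inv] at h3
        have := h1 p (hF hp)
        have := h1 q (hF hq)
        linarith
      · intro v
        have hp0 : v.embedding p.1 ≠ 0 := by simpa using ep.1
        have hq0 : v.embedding q.1 ≠ 0 := by simpa using eq'.1
        set δ := Complex.log (v.embedding p.1) - Complex.log (v.embedding q.1) with hδ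
        have e1 : v.embedding (p.1 / q.1 - 1) = Complex.exp δ - 1 := by
          rw [hδ, Complex.exp_sub, Complex.exp_log hp0, Complex.exp_log hq0]; simp
        have c1 := hclose p hp q hq (Sum.inl v)
        have c2 := hclose p hp q hq (Sum.inr v)
        simp only [Sum.elim_inl, Sum.elim_inr] at c1 c2
        have e2 : ‖δ‖ ≤ 2 * Real.exp (-13) := by
          refine (Complex.norm_le_abs_re_add_abs_im δ).trans ?_
          rw [hδ, Complex.sub_re, Complex.sub_im]
          linarith
        have e4 : 4 * Real.exp (-13) ≤ Real.exp (-11) := by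
          rw [show (-11 : ℝ) = 2 + -13 by norm_num, Real.exp_add]
          have : (4 : ℝ) ≤ Real.exp 2 := by
            rw [show (2 : ℝ) = 1 + 1 by norm_num, Real.exp_add]
            nlinarith [Real.add_one_le_exp (1 : ℝ)]
          have h0 := Real.exp_pos (-13)
          nlinarith
        have e5 : Real.exp (-11) ≤ 1 := Real.exp_le_one_iff.mpr (by norm_num)
        have e3 : ‖δ‖ ≤ 1 := by linarith [Real.exp_pos (-13)]
        rw [← InfinitePlace.norm_embedding_eq, e1]
        refine (Complex.norm_exp_sub_one_le e3).trans ?_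
        linarith
    exact_mod_cast this

end tbUnit
section tbUnit2

open Finset Height

variable {K : Type*} [Field K] [NumberField K]

lemma tb_sol_one_sub {T : Finset (HeightOneSpectrum (𝓞 K))} {c : K}
    {r : HeightOneSpectrum (𝓞 K) → ℝ} {p : K × K} (hp : tbSol T c r p) {q} (hq : q ∉ T) :
    FinitePlace.mk q (1 - p.1) ≤ 1 ∧ FinitePlace.mk q c ≤ FinitePlace.mk q (1 - p.1) := by
  obtain ⟨_, _, h, hT⟩ := hp
  obtain ⟨h1, h2, _⟩ := hT q hq
  have a1 : FinitePlace.mk q (1 - p.1) ≤ 1 := by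
    rw [sub_eq_add_neg]
    refine (FinitePlace.add_le _ _ _).trans (max_le (by simp) ?_)
    rw [map_neg_eq_map, h1]
  have a2 : FinitePlace.mk q (1 - p.2) ≤ 1 := by
    rw [sub_eq_add_neg]
    refine (FinitePlace.add_le _ _ _).trans (max_le (by simp) ?_)
    rw [map_neg_eq_map]; exact h2
  refine ⟨a1, ?_⟩
  rw [← h, map_mul]
  exact mul_le_of_le_one_right (apply_nonneg _ _) a2

lemma tb_w_height {c : K} (hc : c ≠ 0) {p : K × K} (h : (1 - p.1) * (1 - p.2) = c) :
    logHeight₁ p.2 ≤ logHeight₁ c + logHeight₁ p.1 + 2 * (totalWeight K * Real.log 2) := by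
  have h1 : 1 - p.1 ≠ 0 := by intro h0; rw [h0, zero_mul] at h; exact hc h.symm
  have e1 : 1 - p.2 = c * (1 - p.1)⁻¹ := by rw [← h]; field_simp
  have a1 := tb_one_sub (1 - p.2)
  rw [sub_sub_cancel] at a1
  have a2 := logHeight₁_mul_le c (1 - p.1)⁻¹
  rw [logHeight₁_inv, ← e1] at a2
  have a3 := tb_one_sub p.1
  linarith

lemma tb_c_height {c : K} {p : K × K} (h : (1 - p.1) * (1 - p.2) = c) :
    logHeight₁ c ≤ logHeight₁ p.1 + logHeight₁ p.2 + 2 * (totalWeight K * Real.log 2) := by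
  have a2 := logHeight₁_mul_le (1 - p.1) (1 - p.2)
  rw [h] at a2
  have a1 := tb_one_sub p.1
  have a3 := tb_one_sub p.2
  linarith

/-- elementary comparison inside a cone -/
lemma tb_cone_aux {ι : Type*} [Fintype ι] (a b : ι → ℝ) (H1 H2 g n S : ℝ) (hH1 : 0 < H1) (hH2 : 0 < H2)
    (hg : ∀ i, |b i / H2 - a i / H1| ≤ g) (hn : n * H1 ≤ H2) (hn2 : H2 ≤ (n + 2) * H1)
    (hS : ∑ i, |a i| ≤ S) :
    ∑ i, |b i - n * a i| ≤ Fintype.card ι * g * H2 + 2 * S := by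
  have h : ∀ i, |b i - n * a i| ≤ g * H2 + 2 * |a i| := by
    intro i
    have e : b i - n * a i = H2 * (b i / H2 - a i / H1) + (H2 / H1 - n) * a i := by
      field_simp; ring
    rw [e]
    refine (abs_add_le _ _).trans ?_
    rw [abs_mul, abs_mul, abs_of_pos hH2]
    have h1 : n ≤ H2 / H1 := by rw [le_div_iff₀ hH1]; exact hn
    have h2 : H2 / H1 ≤ n + 2 := by rw [div_le_iff₀ hH1]; exact hn2
    rw [abs_of_nonneg (show 0 ≤ H2 / H1 - n by linarith)]
    have h3 := mul_le_mul_of_nonneg_left (hg i) hH2.le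
    have h4 : (H2 / H1 - n) * |a i| ≤ 2 * |a i| :=
      mul_le_mul_of_nonneg_right (by linarith) (abs_nonneg _)
    linarith
  refine (Finset.sum_le_sum (fun i _ => h i)).trans ?_
  have h5 : ∑ i, 2 * |a i| = 2 * ∑ i, |a i| := by rw [Finset.mul_sum]
  rw [Finset.sum_add_distrib, h5, Finset.sum_const, Finset.card_univ, nsmul_eq_mul]
  linarith

lemma tb_cone (T : Finset (HeightOneSpectrum (𝓞 K))) {c : K} (hc : c ≠ 0)
    (r : HeightOneSpectrum (𝓞 K) → ℝ) (p1 p2 : K × K) (hp1 : tbSol T c r p1) (hp2 : tbSol T c r p2)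
    (hD : 100 * (totalWeight K : ℝ) ≤ logHeight₁ p1.1) (hh : 100 * logHeight₁ c ≤ logHeight₁ p1.1)
    (g : ℝ) (hg : g * (2 * (T.card + Fintype.card (InfinitePlace K) : ℕ)) = 1 / 10)
    (hu : ∀ i, |tbL T p2.1 i / logHeight₁ p2.1 - tbL T p1.1 i / logHeight₁ p1.1| ≤ g)
    (hv : ∀ i, |tbL T (1 - p2.1) i / logHeight₁ p2.1 - tbL T (1 - p1.1) i / logHeight₁ p1.1| ≤ g) :
    logHeight₁ p2.1 ≤ 40 * logHeight₁ p1.1 := by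
  by_contra hcon
  push Not at hcon
  have hD1 := tb_D_pos (K := K)
  set D : ℝ := (totalWeight K : ℝ) with hDdef
  set H1 := logHeight₁ p1.1 with hH1
  set H2 := logHeight₁ p2.1 with hH2
  set h := logHeight₁ c with hhdef
  have H1pos : 0 < H1 := by linarith
  have H2pos : 0 < H2 := by linarith
  set R := H2 / H1 with hR
  have hR40 : 40 < R := by rw [hR, lt_div_iff₀ H1pos]; exact hcon
  set k := ⌊(R - 3) / 2⌋₊ with hk
  have hk1 : (k : ℝ) ≤ (R - 3) / 2 := Nat.floor_le (by linarith)
  have hk2 : (R - 3) / 2 < k + 1 := Nat.lt_floor_add_one _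
  have eRH : R * H1 = H2 := by rw [hR]; field_simp
  have hn1 : ((2 * k + 3 : ℕ) : ℝ) * H1 ≤ H2 := by
    rw [← eRH]; push_cast
    exact mul_le_mul_of_nonneg_right (by linarith) H1pos.le
  have hn2 : H2 ≤ (((2 * k + 3 : ℕ) : ℝ) + 2) * H1 := by
    rw [← eRH]; push_cast
    exact mul_le_mul_of_nonneg_right (by linarith) H1pos.le
  have n1 : 1 - p1.1 ≠ 0 := by
    intro h0; have := hp1.2.2.1; rw [h0, zero_mul] at this; exact hc this.symm
  have n2 : 1 - p2.1 ≠ 0 := by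
    intro h0; have := hp2.2.2.1; rw [h0, zero_mul] at this; exact hc this.symm
  set N := 2 * k + 3 with hN
  set X := p2.1 / p1.1 ^ N with hX
  set Y := (1 - p2.1) / (1 - p1.1) ^ N with hY
  have z0 := hp1.1
  have hY0 : Y ≠ 0 := div_ne_zero n2 (pow_ne_zero _ n1)
  have hXY : X * p1.1 ^ N + Y * (1 - p1.1) ^ N = 1 := by
    rw [hX, hY, div_mul_cancel₀ _ (pow_ne_zero _ z0), div_mul_cancel₀ _ (pow_ne_zero _ n1)]; ring
  have main := tb_pade_main k p1.1 X Y hY0 hXY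
  set s := T.card + Fintype.card (InfinitePlace K) with hs
  have hgs : (s : ℝ) * g = 1 / 20 := by linarith
  have bX : logHeight₁ X ≤ H2 / 20 + 4 * H1 := by
    have e1 := tb_height_le T X 1 0 (by
      intro q hq
      rw [hX, map_div₀, map_pow, (hp1.2.2.2 q hq).1, (hp2.2.2.2 q hq).1]; simp)
    have e2 := tb_cone_aux (tbL T p1.1) (tbL T p2.1) H1 H2 g (N : ℕ) (2 * H1) H1pos H2pos hu hn1 hn2
      (tb_S_le T p1.1)
    rw [tb_card, ← hs, hgs] at e2
    have e3 : ∀ i, tbL T X i = tbL T p2.1 i - N * tbL T p1.1 i := by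
      intro i; rw [hX, tbL_div T hp2.1 (pow_ne_zero _ z0), tbL_pow]
    simp only [e3, Nat.cast_zero, zero_mul, add_zero] at e1
    linarith
  have hL : D * Real.log 2 ≤ D * 0.7 := mul_le_mul_of_nonneg_left tb_log2 (by linarith)
  have bY : logHeight₁ Y ≤ H2 / 20 + 4 * (H1 + D * Real.log 2) + N * h := by
    have e1 := tb_height_le T Y c⁻¹ N (by
      intro q hq
      have a1 := tb_sol_one_sub hp1 hq
      have a2 := tb_sol_one_sub hp2 hq
      have cpos : 0 < FinitePlace.mk q c := by
        rw [FinitePlace.pos_iff]; exact hc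
      rw [hY, map_div₀, map_pow, map_inv₀]
      have b1 : (FinitePlace.mk q (1 - p2.1)) / (FinitePlace.mk q (1 - p1.1)) ^ N ≤
          1 / (FinitePlace.mk q c) ^ N := by
        have := a1.2
        gcongr
        exact a2.1
      refine b1.trans ?_
      rw [one_div, ← inv_pow]
      exact pow_le_pow_left₀ (by positivity) (le_max_left _ _) _)
    rw [logHeight₁_inv] at e1
    have e2 := tb_cone_aux (tbL T (1 - p1.1)) (tbL T (1 - p2.1)) H1 H2 g (N : ℕ)
      (2 * logHeight₁ (1 - p1.1)) H1pos H2pos hv hn1 hn2 (tb_S_le T (1 - p1.1))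
    rw [tb_card, ← hs, hgs] at e2
    have e3 : ∀ i, tbL T Y i = tbL T (1 - p2.1) i - N * tbL T (1 - p1.1) i := by
      intro i; rw [hY, tbL_div T n2 (pow_ne_zero _ n1), tbL_pow]
    simp only [e3] at e1
    have e4 := tb_one_sub p1.1
    linarith
  have hk18 : (18 : ℝ) ≤ k := by
    have : 17 < (k : ℝ) := by linarith
    have : 17 < k := by exact_mod_cast this
    exact_mod_cast this
  have c1 : (N : ℝ) * h ≤ N * (H1 / 100) := mul_le_mul_of_nonneg_left (by linarith) (by positivity)
  have c2 : D * ((6 * k + 8) * Real.log 2) ≤ (6 * k + 8) * (0.007 * H1) := by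
    have : D * ((6 * k + 8) * Real.log 2) = (6 * k + 8) * (D * Real.log 2) := by ring
    rw [this]
    apply mul_le_mul_of_nonneg_left _ (by positivity)
    linarith
  have hNr : (N : ℝ) = 2 * k + 3 := by rw [hN]; push_cast; ring
  rw [hNr] at c1 bY hn2
  have c3 : (2 * (k : ℝ) + 3) * H1 ≤ (k + 2) * H1 + ((2 * k + 3 + 2) * H1 / 10 + 8.1 * H1 +
    (2 * k + 3) * (H1 / 100)) + (6 * k + 8) * (0.007 * H1) := by linarith
  have c4 : (2 * (k : ℝ) + 3) ≤ (k + 2) + ((2 * k + 3 + 2) / 10 + 8.1 +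
    (2 * k + 3) / 100) + (6 * k + 8) * 0.007 := by
    apply le_of_mul_le_mul_right _ H1pos
    linarith
  linarith

/-- III: solutions of large height -/
lemma tb_III (T : Finset (HeightOneSpectrum (𝓞 K))) {c : K} (hc : c ≠ 0)
    (r : HeightOneSpectrum (𝓞 K) → ℝ) (E : Finset (K × K)) (hE : ∀ p ∈ E, tbSol T c r p)
    (h1 : ∀ p ∈ E, 100 * (totalWeight K : ℝ) ≤ logHeight₁ p.1)
    (h2 : ∀ p ∈ E, 100 * logHeight₁ c ≤ logHeight₁ p.1) :
    (E.card : ℝ) ≤ (2 * (Real.exp 1 * (32 * 80 + 3)) ^ (2 * (T.card + Fintype.card (InfinitePlace K)))) *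
      (Real.exp 1 * (2 * (50 + 1) + 1)) ^ (2 * (T.card + Fintype.card (InfinitePlace K))) := by
  have hD := tb_D_pos (K := K)
  set s := T.card + Fintype.card (InfinitePlace K) with hs
  have hs1 : 1 ≤ s := by have := tb_one_le_card (K := K); omega
  have hs0 : (0 : ℝ) < s := by exact_mod_cast hs1
  have hcard : Fintype.card ((InfinitePlace K ⊕ T) ⊕ (InfinitePlace K ⊕ T)) = 2 * s := by
    rw [Fintype.card_sum, tb_card, ← hs]; ring
  have hL : (totalWeight K : ℝ) * Real.log 2 ≤ totalWeight K * 0.7 :=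
    mul_le_mul_of_nonneg_left tb_log2 (by linarith)
  have key := tb_box (ι := (InfinitePlace K ⊕ T) ⊕ (InfinitePlace K ⊕ T)) E
    (fun p => Sum.elim (fun i => tbL T p.1 i / logHeight₁ p.1)
      (fun i => tbL T (1 - p.1) i / logHeight₁ p.1)) (5 / (2 * s)) (1 / 10 / (2 * s))
    (2 * (Real.exp 1 * (32 * 80 + 3)) ^ (2 * s))
    (by positivity) (by positivity) (by positivity) ?_ ?_
  · rw [hcard] at key
    have e : (5 / (2 * (s : ℝ))) / (1 / 10 / (2 * s)) = 50 := by field_simp; norm_num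
    rw [e] at key
    exact key
  · intro p hp
    have hpos : 0 < logHeight₁ p.1 := by linarith [h1 p hp]
    rw [hcard, Fintype.sum_sum_type]
    simp only [Sum.elim_inl, Sum.elim_inr, abs_div, abs_of_pos hpos]
    rw [← Finset.sum_div, ← Finset.sum_div, ← add_div, div_le_iff₀ hpos]
    have h3 := tb_S_le T p.1
    have h4 := tb_S_le T (1 - p.1)
    have h5 := tb_one_sub p.1
    have h8 : 5 / (2 * s) * ((2 * s : ℕ) : ℝ) = 5 := by
      push_cast; field_simp
    rw [h8]
    have := h1 p hp
    linarith
  · intro F hF hclose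
    rcases F.eq_empty_or_nonempty with rfl | hne
    · simp; positivity
    obtain ⟨p1, hp1, hmin⟩ := Finset.exists_min_image F (fun p => logHeight₁ p.1) hne
    have hle : ∀ p ∈ F, logHeight₁ p.1 ≤ 40 * logHeight₁ p1.1 := by
      intro p hp
      refine tb_cone T hc r p1 p (hE _ (hF hp1)) (hE _ (hF hp)) (h1 _ (hF hp1)) (h2 _ (hF hp1))
        (1 / 10 / (2 * s)) ?_ ?_ ?_
      · rw [← hs]; field_simp
      · intro i; exact hclose p hp p1 hp1 (Sum.inl i)
      · intro i; exact hclose p hp p1 hp1 (Sum.inr i)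
    have a1 := h1 _ (hF hp1)
    have a2 := h2 _ (hF hp1)
    have hII := tb_II T hc r F (fun p hp => hE p (hF hp)) (logHeight₁ p1.1) 80 (by linarith)
      (by norm_num) (fun p hp => (hmin p hp).trans (le_max_left _ _)) ?_
    · exact hII
    · intro p hp
      have b1 := hle p hp
      have b2 := tb_w_height hc (hE p (hF hp)).2.2.1
      apply max_le <;> linarith

lemma tb_exp_ge (n : ℕ) : (2 : ℝ) ^ n ≤ Real.exp n := by
  rw [← Real.exp_one_pow]
  exact pow_le_pow_left₀ (by norm_num) (by linarith [Real.add_one_le_exp (1 : ℝ)]) n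

/-- The unit lemma for finite sets. -/
lemma tb_unit (T : Finset (HeightOneSpectrum (𝓞 K))) {c : K} (hc : c ≠ 0)
    (r : HeightOneSpectrum (𝓞 K) → ℝ) (E : Finset (K × K)) (hE : ∀ p ∈ E, tbSol T c r p) :
    (E.card : ℝ) ≤ Real.exp (45 * (T.card + Fintype.card (InfinitePlace K) : ℕ)) := by
  have hD := tb_D_pos (K := K)
  set s := T.card + Fintype.card (InfinitePlace K) with hs
  have hs1 : 1 ≤ s := by have := tb_one_le_card (K := K); omega
  have hs1' : (1 : ℝ) ≤ s := by exact_mod_cast hs1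
  have hL : (totalWeight K : ℝ) * Real.log 2 ≤ totalWeight K * 0.7 :=
    mul_le_mul_of_nonneg_left tb_log2 (by linarith)
  set D : ℝ := (totalWeight K : ℝ) with hDdef
  set h := logHeight₁ c with hh
  set E3 := E.filter (fun p => 100 * max D h ≤ logHeight₁ p.1) with hE3
  set Er := E.filter (fun p => ¬ 100 * max D h ≤ logHeight₁ p.1) with hEr
  set E1 := Er.filter (fun p => max (logHeight₁ p.1) (logHeight₁ p.2) ≤ 5 * D) with hE1
  set E2 := Er.filter (fun p => ¬ max (logHeight₁ p.1) (logHeight₁ p.2) ≤ 5 * D) with hE2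
  have card1 : E3.card + Er.card = E.card := Finset.card_filter_add_card_filter_not _
  have card2 : E1.card + E2.card = Er.card := Finset.card_filter_add_card_filter_not _
  have mD := le_max_left D h
  have mh := le_max_right D h
  have b3 := tb_III T hc r E3 (fun p hp => hE p (Finset.mem_filter.mp hp).1)
    (fun p hp => by have := (Finset.mem_filter.mp hp).2; linarith)
    (fun p hp => by have := (Finset.mem_filter.mp hp).2; linarith)
  have b1 := tb_Ismall hc E1
    (fun p hp => by
      have := hE p (Finset.mem_filter.mp (Finset.mem_filter.mp hp).1).1
      exact ⟨this.1, this.2.2.1⟩)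
    (fun p hp => (le_max_left _ _).trans (Finset.mem_filter.mp hp).2)
  have b2 := tb_II T hc r E2
    (fun p hp => hE p (Finset.mem_filter.mp (Finset.mem_filter.mp hp).1).1)
    (max (5 * D) (h / 3)) 309 (le_max_left _ _) (by norm_num)
    (fun p hp => by
      obtain ⟨hp1, hp2⟩ := Finset.mem_filter.mp hp
      have hp0 := hE p (Finset.mem_filter.mp hp1).1
      push Not at hp2
      have m1 := le_max_left (logHeight₁ p.1) (logHeight₁ p.2)
      have m2 := le_max_right (logHeight₁ p.1) (logHeight₁ p.2)
      have := tb_c_height hp0.2.2.1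
      apply max_le <;> linarith)
    (fun p hp => by
      obtain ⟨hp1, hp2⟩ := Finset.mem_filter.mp hp
      obtain ⟨hp3, hp4⟩ := Finset.mem_filter.mp hp1
      have hp0 := hE p hp3
      push Not at hp4
      have := tb_w_height hc hp0.2.2.1
      have q1 := le_max_left (5 * D) (h / 3)
      have q2 := le_max_right (5 * D) (h / 3)
      have q3 : max D h ≤ 3 * max (5 * D) (h / 3) := max_le (by linarith) (by linarith)
      apply max_le <;> linarith)
  have hn : Fintype.card (InfinitePlace K) ≤ s := by omega
  have e7 : (32 * 80 + 3 : ℝ) ≤ Real.exp 12 := by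
    have := tb_exp_ge 12; push_cast at this; linarith
  have e8 : (2 * (50 + 1) + 1 : ℝ) ≤ Real.exp 7 := by
    have := tb_exp_ge 7; push_cast at this; linarith
  have e9 : (32 * 309 + 3 : ℝ) ≤ Real.exp 14 := by
    have := tb_exp_ge 14; push_cast at this; linarith
  have e10 : 2 * (12 / Real.exp (-13) + 1) + 1 ≤ Real.exp 18 := by
    rw [Real.exp_neg, div_inv_eq_mul, show (18 : ℝ) = 5 + 13 by norm_num, Real.exp_add]
    have h5 := tb_exp_ge 5
    push_cast at h5
    have h13 : (1 : ℝ) ≤ Real.exp 13 := Real.one_le_exp (by norm_num)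
    nlinarith
  have f : ∀ (A x : ℝ) (m : ℕ), 0 ≤ A → A ≤ Real.exp x →
      (Real.exp 1 * A) ^ m ≤ Real.exp ((1 + x) * m) := by
    intro A x m hA hx
    rw [mul_comm (1 + x), Real.exp_nat_mul, Real.exp_add]
    gcongr
  have f7 := f _ _ (2 * s) (by positivity) e7
  have f8 := f _ _ (2 * s) (by positivity) e8
  have f9 := f _ _ (2 * s) (by positivity) e9
  have f10 := f _ _ (2 * Fintype.card (InfinitePlace K)) (by positivity) e10
  have hn' : (Fintype.card (InfinitePlace K) : ℝ) ≤ s := by exact_mod_cast hn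
  have t3 : (E3.card : ℝ) ≤ 2 * Real.exp (42 * s) := by
    refine b3.trans ?_
    have : Real.exp (42 * s) = Real.exp ((1 + 12) * (2 * s : ℕ)) * Real.exp ((1 + 7) * (2 * s : ℕ)) := by
      rw [← Real.exp_add]; push_cast; ring_nf
    rw [this, ← mul_assoc]
    gcongr
  have t2 : (E2.card : ℝ) ≤ 2 * Real.exp (42 * s) := by
    refine b2.trans ?_
    have : Real.exp ((1 + 14) * (2 * s : ℕ)) ≤ Real.exp (42 * s) := by
      apply Real.exp_le_exp.mpr; push_cast; nlinarith
    linarith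
  have t1 : (E1.card : ℝ) ≤ Real.exp (42 * s) := by
    refine (b1.trans f10).trans ?_
    apply Real.exp_le_exp.mpr; push_cast; nlinarith
  have tot : (E.card : ℝ) = E3.card + (E1.card + E2.card) := by
    rw [← card1, ← card2]; push_cast; ring
  have : Real.exp (45 * s) = Real.exp (3 * s) * Real.exp (42 * s) := by
    rw [← Real.exp_add]; ring_nf
  have h3 : 5 ≤ Real.exp (3 * s) := by
    have h5 := tb_exp_ge 3
    push_cast at h5
    have : Real.exp 3 ≤ Real.exp (3 * s) := Real.exp_le_exp.mpr (by linarith)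
    linarith
  have hpos := Real.exp_pos (42 * s)
  nlinarith

end tbUnit2

section TBDyn

def tbW {R : Type*} [CommRing R] (p r : Fin 2 → R) : R := p 0 * r 1 - p 1 * r 0

theorem tb_map_eval {R S σ : Type*} [CommRing R] [CommRing S] (f : R →+* S) (g : σ → R)
    (p : MvPolynomial σ R) : f (eval g p) = eval (fun i => f (g i)) (map f p) :=
  map_eval f g p

theorem tb_hom_eval {R : Type*} [CommRing R] {n : ℕ} {F : MvPolynomial (Fin 2) R}
    (hF : F.IsHomogeneous n) (a : R) (p : Fin 2 → R) :
    eval (fun i => a * p i) F = a ^ n * eval p F := by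
  rw [eval_eq', eval_eq', Finset.mul_sum]
  refine Finset.sum_congr rfl fun m hm => ?_
  have h := hF (mem_support_iff.mp hm)
  have h2 : m 0 + m 1 = n := by
    rw [← h, Finsupp.weight_apply, Finsupp.sum_fintype _ _ (by simp)]
    simp [Fin.sum_univ_two]
  rw [Fin.prod_univ_two, Fin.prod_univ_two, ← h2]
  ring

theorem tb_dvd {R : Type*} [CommRing R] {n : ℕ} {F G : MvPolynomial (Fin 2) R}
    (hF : F.IsHomogeneous n) (hG : G.IsHomogeneous n) (p q : Fin 2 → R)
    (h : IsUnit (p 0) ∨ IsUnit (p 1)) :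
    tbW p q ∣ tbW ![eval p F, eval p G] ![eval q F, eval q G] := by
  have key : ∃ l : R, ∀ i, Ideal.Quotient.mk (Ideal.span {tbW p q}) (q i)
      = Ideal.Quotient.mk (Ideal.span {tbW p q}) l * Ideal.Quotient.mk (Ideal.span {tbW p q}) (p i) := by
    rcases h with h | h
    · obtain ⟨u, hu⟩ := h
      refine ⟨q 0 * (u⁻¹ : Rˣ), fun i => ?_⟩
      rw [← map_mul, Ideal.Quotient.eq, Ideal.mem_span_singleton]
      have h1 : p 0 * (u⁻¹ : Rˣ) = 1 := by rw [← hu]; simp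
      fin_cases i
      · refine ⟨0, ?_⟩
        simp only [Fin.zero_eta]
        linear_combination (- q 0) * h1
      · refine ⟨(u⁻¹ : Rˣ), ?_⟩
        simp only [Fin.mk_one, tbW]
        linear_combination (- q 1) * h1
    · obtain ⟨u, hu⟩ := h
      refine ⟨q 1 * (u⁻¹ : Rˣ), fun i => ?_⟩
      rw [← map_mul, Ideal.Quotient.eq, Ideal.mem_span_singleton]
      have h1 : p 1 * (u⁻¹ : Rˣ) = 1 := by rw [← hu]; simp
      fin_cases i
      · refine ⟨-(u⁻¹ : Rˣ), ?_⟩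
        simp only [Fin.zero_eta, tbW]
        linear_combination (- q 0) * h1
      · refine ⟨0, ?_⟩
        simp only [Fin.mk_one]
        linear_combination (- q 1) * h1
  obtain ⟨l, hl⟩ := key
  rw [← Ideal.mem_span_singleton, ← Ideal.Quotient.eq_zero_iff_mem]
  set π := Ideal.Quotient.mk (Ideal.span {tbW p q})
  have e1 : π (eval q F) = (π l) ^ n * π (eval p F) := by
    rw [tb_map_eval, tb_map_eval, ← tb_hom_eval (hF.map π)]
    congr 2; funext i; exact hl i
  have e2 : π (eval q G) = (π l) ^ n * π (eval p G) := by
    rw [tb_map_eval, tb_map_eval, ← tb_hom_eval (hG.map π)]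
    congr 2; funext i; exact hl i
  have e3 : tbW ![eval p F, eval p G] ![eval q F, eval q G]
      = eval p F * eval q G - eval p G * eval q F := by simp [tbW]
  rw [e3, RingHom.map_sub, RingHom.map_mul, RingHom.map_mul, e1, e2]
  ring

variable {K : Type*} [Field K] [NumberField K]

theorem tb_le_one_iff (q : HeightOneSpectrum (𝓞 K)) (x : K) :
    FinitePlace.mk q x ≤ 1 ↔ q.valuation K x ≤ 1 := by
  rw [FinitePlace.mk_apply, FinitePlace.norm_embedding,
    NumberField.HeightOneSpectrum.adicAbv_def]
  rw [← WithZeroMulInt.toNNReal_le_one_iff (NumberField.HeightOneSpectrum.one_lt_absNorm_nnreal q)]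
  norm_cast

noncomputable def tbN (v : FinitePlace K) (p : Fin 2 → K) : ℝ := max (v (p 0)) (v (p 1))

noncomputable def tbD (v : FinitePlace K) (P R : P1 K) : ℝ :=
  v (tbW P.rep R.rep) / (tbN v P.rep * tbN v R.rep)

theorem tbN_smul (v : FinitePlace K) (a : K) (p : Fin 2 → K) :
    tbN v (a • p) = v a * tbN v p := by
  simp only [tbN, Pi.smul_apply, smul_eq_mul, map_mul]
  rw [mul_max_of_nonneg _ _ (apply_nonneg v a)]

theorem tbN_pos (v : FinitePlace K) {p : Fin 2 → K} (hp : p ≠ 0) : 0 < tbN v p := by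
  by_contra h
  apply hp
  rw [not_lt, tbN, max_le_iff] at h
  funext i
  by_contra hi
  have := FinitePlace.pos_iff (w := v).mpr hi
  fin_cases i
  · exact absurd h.1 (not_le.mpr this)
  · exact absurd h.2 (not_le.mpr this)

theorem tbD_mk (v : FinitePlace K) (p r : Fin 2 → K) (hp : p ≠ 0) (hr : r ≠ 0) :
    tbD v (Projectivization.mk K p hp) (Projectivization.mk K r hr)
      = v (tbW p r) / (tbN v p * tbN v r) := by
  obtain ⟨a, ha⟩ := Projectivization.exists_smul_eq_mk_rep K p hp
  obtain ⟨b, hb⟩ := Projectivization.exists_smul_eq_mk_rep K r hr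
  have ha' : (a : K) • p = (Projectivization.mk K p hp).rep := ha
  have hb' : (b : K) • r = (Projectivization.mk K r hr).rep := hb
  have hva : 0 < v (a : K) := FinitePlace.pos_iff.mpr a.ne_zero
  have hvb : 0 < v (b : K) := FinitePlace.pos_iff.mpr b.ne_zero
  have hN1 := tbN_pos v hp
  have hN2 := tbN_pos v hr
  have hW : tbW ((a : K) • p) ((b : K) • r) = a * b * tbW p r := by
    simp only [tbW, Pi.smul_apply, smul_eq_mul]; ring
  rw [tbD, ← ha', ← hb', tbN_smul, tbN_smul, hW, map_mul, map_mul]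
  field_simp

theorem tbD_comm (v : FinitePlace K) (P R : P1 K) : tbD v P R = tbD v R P := by
  have : tbW P.rep R.rep = - tbW R.rep P.rep := by simp only [tbW]; ring
  rw [tbD, tbD, this, map_neg_eq_map, mul_comm (tbN v P.rep)]

theorem tbW_ne {P R : P1 K} (h : P ≠ R) : tbW P.rep R.rep ≠ 0 := by
  intro h0
  apply h
  rw [← P.mk_rep, ← R.mk_rep, Projectivization.mk_eq_mk_iff']
  have hR := R.rep_nonzero
  simp only [tbW] at h0
  by_cases h1 : R.rep 0 = 0
  · have h2 : R.rep 1 ≠ 0 := by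
      intro h2; apply hR; funext i; fin_cases i
      · exact h1
      · exact h2
    refine ⟨P.rep 1 / R.rep 1, ?_⟩
    have h3 : P.rep 0 = 0 := by
      rw [h1] at h0
      have : P.rep 0 * R.rep 1 = 0 := by linear_combination h0
      exact (mul_eq_zero.mp this).resolve_right h2
    funext i; fin_cases i
    · simp [h1, h3]
    · simp [h2]
  · refine ⟨P.rep 0 / R.rep 0, ?_⟩
    funext i; fin_cases i
    · simp [h1]
    · simp only [Fin.mk_one, Pi.smul_apply, smul_eq_mul]
      field_simp
      linear_combination h0

theorem tbD_pos (v : FinitePlace K) {P R : P1 K} (h : P ≠ R) : 0 < tbD v P R :=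
  div_pos (FinitePlace.pos_iff.mpr (tbW_ne h))
    (mul_pos (tbN_pos v P.rep_nonzero) (tbN_pos v R.rep_nonzero))

theorem tbD_ultra (v : FinitePlace K) (P Q R : P1 K) :
    tbD v P R ≤ max (tbD v P Q) (tbD v Q R) := by
  have hP := tbN_pos v P.rep_nonzero
  have hQ := tbN_pos v Q.rep_nonzero
  have hR := tbN_pos v R.rep_nonzero
  have key : ∀ i, v (tbW P.rep R.rep) * v (Q.rep i) ≤
      max (tbD v P Q) (tbD v Q R) * (tbN v P.rep * tbN v Q.rep * tbN v R.rep) := by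
    intro i
    have e : tbW P.rep R.rep * Q.rep i
        = tbW P.rep Q.rep * R.rep i + tbW Q.rep R.rep * P.rep i := by
      simp only [tbW]; fin_cases i
      · simp only [Fin.zero_eta]; ring
      · simp only [Fin.mk_one]; ring
    have hRi : v (R.rep i) ≤ tbN v R.rep := by
      fin_cases i
      · exact le_max_left _ _
      · exact le_max_right _ _
    have hPi : v (P.rep i) ≤ tbN v P.rep := by
      fin_cases i
      · exact le_max_left _ _
      · exact le_max_right _ _
    have d1 : v (tbW P.rep Q.rep) = tbD v P Q * (tbN v P.rep * tbN v Q.rep) := by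
      rw [tbD]; field_simp
    have d2 : v (tbW Q.rep R.rep) = tbD v Q R * (tbN v Q.rep * tbN v R.rep) := by
      rw [tbD]; field_simp
    have hD1 : 0 ≤ tbD v P Q := div_nonneg (apply_nonneg v _) (mul_pos hP hQ).le
    have hD2 : 0 ≤ tbD v Q R := div_nonneg (apply_nonneg v _) (mul_pos hQ hR).le
    rw [← map_mul, e]
    refine (FinitePlace.add_le v _ _).trans (max_le ?_ ?_)
    · rw [map_mul, d1]
      calc tbD v P Q * (tbN v P.rep * tbN v Q.rep) * v (R.rep i)
          ≤ max (tbD v P Q) (tbD v Q R) * (tbN v P.rep * tbN v Q.rep) * tbN v R.rep := by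
            gcongr
            exact le_max_left _ _
        _ = _ := by ring
    · rw [map_mul, d2]
      calc tbD v Q R * (tbN v Q.rep * tbN v R.rep) * v (P.rep i)
          ≤ max (tbD v P Q) (tbD v Q R) * (tbN v Q.rep * tbN v R.rep) * tbN v P.rep := by
            gcongr
            exact le_max_right _ _
        _ = _ := by ring
  have key2 : v (tbW P.rep R.rep) * tbN v Q.rep ≤
      max (tbD v P Q) (tbD v Q R) * (tbN v P.rep * tbN v Q.rep * tbN v R.rep) := by
    rcases max_choice (v (Q.rep 0)) (v (Q.rep 1)) with h | h
    · conv_lhs => rw [tbN, h]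
      exact key 0
    · conv_lhs => rw [tbN, h]
      exact key 1
  conv_lhs => rw [tbD]
  rw [div_le_iff₀ (mul_pos hP hR)]
  refine le_of_mul_le_mul_right (key2.trans_eq ?_) hQ
  ring

theorem tb_norm_rep (q : HeightOneSpectrum (𝓞 K)) (P : P1 K) :
    ∃ p : Fin 2 → (q.valuation (K := K)).valuationSubring,
      (IsUnit (p 0) ∨ IsUnit (p 1)) ∧
      ∃ h : ![(p 0 : K), (p 1 : K)] ≠ 0, P = Projectivization.mk K ![(p 0 : K), (p 1 : K)] h := by
  have hne := P.rep_nonzero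
  have hex : ∃ a : K, a ≠ 0 ∧ (q.valuation K (P.rep 0) ≤ q.valuation K a) ∧
      (q.valuation K (P.rep 1) ≤ q.valuation K a) ∧ (a = P.rep 0 ∨ a = P.rep 1) := by
    rcases le_total (q.valuation K (P.rep 0)) (q.valuation K (P.rep 1)) with h | h
    · refine ⟨P.rep 1, ?_, h, le_rfl, Or.inr rfl⟩
      intro h1
      rw [h1, map_zero, le_zero_iff, map_eq_zero] at h
      apply hne; funext i; fin_cases i
      · exact h
      · exact h1
    · refine ⟨P.rep 0, ?_, le_rfl, h, Or.inl rfl⟩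
      intro h1
      rw [h1, map_zero, le_zero_iff, map_eq_zero] at h
      apply hne; funext i; fin_cases i
      · exact h1
      · exact h
  obtain ⟨a, ha, h0, h1, hor⟩ := hex
  have hva : 0 < q.valuation K a := zero_lt_iff.mpr ((Valuation.ne_zero_iff _).mpr ha)
  have m : ∀ x : K, q.valuation K x ≤ q.valuation K a →
      x / a ∈ (q.valuation (K := K)).valuationSubring := by
    intro x hx
    rw [Valuation.mem_valuationSubring_iff, map_div₀]
    exact div_le_one_of_le₀ hx zero_le
  have hv : ![P.rep 0 / a, P.rep 1 / a] = a⁻¹ • P.rep := by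
    funext i; fin_cases i <;> simp [div_eq_inv_mul]
  have hv0 : a⁻¹ • P.rep ≠ 0 := smul_ne_zero (inv_ne_zero ha) hne
  refine ⟨![⟨_, m _ h0⟩, ⟨_, m _ h1⟩], ?_, ?_⟩
  · rcases hor with h | h
    · left
      convert isUnit_one
      simp [← h, ha]
      rfl
    · right
      convert isUnit_one
      simp [← h, ha]
      rfl
  · refine ⟨?_, ?_⟩
    · simpa [hv] using hv0
    · conv_lhs => rw [← P.mk_rep]
      rw [Projectivization.mk_eq_mk_iff']
      refine ⟨a, ?_⟩
      funext i; fin_cases i <;> simp <;> field_simp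

theorem tb_v_le (q : HeightOneSpectrum (𝓞 K)) (x : (q.valuation (K := K)).valuationSubring) :
    FinitePlace.mk q (x : K) ≤ 1 :=
  (tb_le_one_iff q _).mpr ((Valuation.mem_valuationSubring_iff _ _).mp x.2)

theorem tb_v_unit (q : HeightOneSpectrum (𝓞 K)) {x : (q.valuation (K := K)).valuationSubring}
    (hx : IsUnit x) : FinitePlace.mk q (x : K) = 1 := by
  obtain ⟨u, rfl⟩ := hx
  refine le_antisymm (tb_v_le q _) ?_
  have h1 := tb_v_le q ((u⁻¹ : _ˣ) : (q.valuation (K := K)).valuationSubring)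
  have h2 : FinitePlace.mk q (((u : (q.valuation (K := K)).valuationSubring)) : K) *
      FinitePlace.mk q (((u⁻¹ : _ˣ) : (q.valuation (K := K)).valuationSubring) : K) = 1 := by
    rw [← map_mul, ← map_one (FinitePlace.mk q)]
    congr 1
    have := congrArg (fun t : (q.valuation (K := K)).valuationSubring => (t : K)) (Units.mul_inv u)
    exact this
  calc (1:ℝ) = _ := h2.symm
    _ ≤ _ := mul_le_of_le_one_right (apply_nonneg _ _) h1

theorem tb_N_unit (q : HeightOneSpectrum (𝓞 K)) (p : Fin 2 → (q.valuation (K := K)).valuationSubring)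
    (h : IsUnit (p 0) ∨ IsUnit (p 1)) :
    tbN (FinitePlace.mk q) ![(p 0 : K), (p 1 : K)] = 1 := by
  simp only [tbN, Matrix.cons_val_zero, Matrix.cons_val_one]
  rcases h with h | h
  · rw [tb_v_unit q h]; exact max_eq_left (tb_v_le q _)
  · rw [tb_v_unit q h]; exact max_eq_right (tb_v_le q _)

variable {d : ℕ}

theorem tb_eval_ne (φ : P1Map K d) {p : Fin 2 → K} (hp : p ≠ 0) :
    ![eval p φ.F, eval p φ.G] ≠ 0 := by
  intro h
  have e : ∀ H : MvPolynomial (Fin 2) K,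
      aeval ![algebraMap K (AlgebraicClosure K) (p 0), algebraMap K (AlgebraicClosure K) (p 1)] H
        = algebraMap K (AlgebraicClosure K) (eval p H) := by
    intro H
    rw [tb_map_eval, aeval_def, ← eval_map]
    congr 2
    funext i; fin_cases i <;> simp
  have h0 : eval p φ.F = 0 := by simpa using congrFun h 0
  have h1 : eval p φ.G = 0 := by simpa using congrFun h 1
  have := φ.coprime (algebraMap K _ (p 0)) (algebraMap K _ (p 1))
    (by rw [e, h0, map_zero]) (by rw [e, h1, map_zero])
  apply hp
  funext i; fin_cases i
  · simpa using this.1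
  · simpa using this.2

theorem tb_phi_mk (φ : P1Map K d) (p : Fin 2 → K) (hp : p ≠ 0) :
    φ.toFun (Projectivization.mk K p hp) =
      Projectivization.mk K ![eval p φ.F, eval p φ.G] (tb_eval_ne φ hp) := by
  have e : p = ![p 0, p 1] := by funext i; fin_cases i <;> simp
  have h0 : ![p 0, p 1] ≠ 0 := e ▸ hp
  have := φ.compat (p 0) (p 1) h0 (tb_eval_ne φ h0)
  convert this using 2 <;> simp only [← e]

theorem tb_good (φ : P1Map K d) (q : HeightOneSpectrum (𝓞 K)) (hq : GoodReductionAt φ q) :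
    ∃ F₀ G₀ : MvPolynomial (Fin 2) (q.valuation (K := K)).valuationSubring,
      F₀.IsHomogeneous d ∧ G₀.IsHomogeneous d ∧
      ∀ p : Fin 2 → (q.valuation (K := K)).valuationSubring, (IsUnit (p 0) ∨ IsUnit (p 1)) →
        (IsUnit (eval p F₀) ∨ IsUnit (eval p G₀)) ∧
        ∀ (h : ![(p 0 : K), (p 1 : K)] ≠ 0) ,
          ∃ h' : ![(eval p F₀ : K), (eval p G₀ : K)] ≠ 0,
          φ.toFun (Projectivization.mk K ![(p 0 : K), (p 1 : K)] h) =
            Projectivization.mk K ![(eval p F₀ : K), (eval p G₀ : K)] h' := by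
  obtain ⟨c, hc, F₀, G₀, hF, hG, -, hres⟩ := hq
  have inj : Function.Injective (q.valuation (K := K)).valuationSubring.subtype :=
    Subtype.coe_injective
  refine ⟨F₀, G₀, ?_, ?_, ?_⟩
  · apply IsHomogeneous.of_map inj
    rw [hF]
    simpa using (isHomogeneous_C (Fin 2) c).mul φ.homF
  · apply IsHomogeneous.of_map inj
    rw [hG]
    simpa using (isHomogeneous_C (Fin 2) c).mul φ.homG
  intro p hp
  have cv : ∀ (H₀ : MvPolynomial (Fin 2) (q.valuation (K := K)).valuationSubring)
      (H : MvPolynomial (Fin 2) K),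
      MvPolynomial.map ((q.valuation (K := K)).valuationSubring.subtype) H₀ = C c * H →
      ((eval p H₀ : (q.valuation (K := K)).valuationSubring) : K)
        = c * eval ![(p 0 : K), (p 1 : K)] H := by
    intro H₀ H hH
    have h1 := tb_map_eval ((q.valuation (K := K)).valuationSubring.subtype) p H₀
    rw [hH, map_mul, eval_C] at h1
    have e : ![(p 0 : K), (p 1 : K)]
        = fun i => (q.valuation (K := K)).valuationSubring.subtype (p i) := by
      funext i; fin_cases i <;> simp
    rw [e]
    exact h1
  constructor
  · by_contra hcon
    push Not at hcon
    obtain ⟨n0, n1⟩ := hcon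
    set ρ := ((algebraMap (IsLocalRing.ResidueField (q.valuation (K := K)).valuationSubring)
              (AlgebraicClosure (IsLocalRing.ResidueField (q.valuation (K := K)).valuationSubring))).comp
            (IsLocalRing.residue _)) with hρ
    have z : ∀ x : (q.valuation (K := K)).valuationSubring, ¬ IsUnit x → ρ x = 0 := by
      intro x hx
      rw [hρ, RingHom.comp_apply, (IsLocalRing.residue_eq_zero_iff x).mpr, map_zero]
      exact (IsLocalRing.mem_maximalIdeal x).mpr hx
    have ee : ![ρ (p 0), ρ (p 1)] = fun i => ρ (p i) := by funext i; fin_cases i <;> simp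
    have := hres (ρ (p 0)) (ρ (p 1))
      (by rw [ee, ← tb_map_eval ρ]; exact z _ n0) (by rw [ee, ← tb_map_eval ρ]; exact z _ n1)
    rcases hp with hp | hp
    · exact (hp.map ρ).ne_zero this.1
    · exact (hp.map ρ).ne_zero this.2
  · intro h
    have e : ![(eval p F₀ : K), (eval p G₀ : K)]
        = c • ![eval ![(p 0 : K), (p 1 : K)] φ.F, eval ![(p 0 : K), (p 1 : K)] φ.G] := by
      rw [cv _ _ hF, cv _ _ hG]
      funext i; fin_cases i <;> simp
    refine ⟨e ▸ smul_ne_zero hc (tb_eval_ne φ h), ?_⟩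
    rw [tb_phi_mk, Projectivization.mk_eq_mk_iff']
    refine ⟨c⁻¹, ?_⟩
    rw [e, smul_smul, inv_mul_cancel₀ hc, one_smul]

theorem tb_contract (φ : P1Map K d) (q : HeightOneSpectrum (𝓞 K)) (hq : GoodReductionAt φ q)
    (P R : P1 K) :
    tbD (FinitePlace.mk q) (φ.toFun P) (φ.toFun R) ≤ tbD (FinitePlace.mk q) P R := by
  obtain ⟨F₀, G₀, hF, hG, H⟩ := tb_good φ q hq
  obtain ⟨p, hp, hp0, rfl⟩ := tb_norm_rep q P
  obtain ⟨r, hr, hr0, rfl⟩ := tb_norm_rep q R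
  obtain ⟨u1, h1⟩ := H p hp
  obtain ⟨u2, h2⟩ := H r hr
  obtain ⟨a1, b1⟩ := h1 hp0
  obtain ⟨a2, b2⟩ := h2 hr0
  rw [b1, b2, tbD_mk, tbD_mk, tb_N_unit q p hp, tb_N_unit q r hr]
  have m1 := tb_N_unit q ![eval p F₀, eval p G₀] (by simpa using u1)
  have m2 := tb_N_unit q ![eval r F₀, eval r G₀] (by simpa using u2)
  simp only [Matrix.cons_val_zero, Matrix.cons_val_one] at m1 m2
  rw [m1, m2, mul_one, div_one, div_one]
  obtain ⟨k, hk⟩ := tb_dvd hF hG p r hp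
  have hk' := congrArg (fun t : (q.valuation (K := K)).valuationSubring => (t : K)) hk
  have e1 : tbW ![(eval p F₀ : K), (eval p G₀ : K)] ![(eval r F₀ : K), (eval r G₀ : K)]
      = tbW ![(p 0 : K), (p 1 : K)] ![(r 0 : K), (r 1 : K)] * (k : K) := by
    simpa [tbW] using hk'
  rw [e1, map_mul]
  exact mul_le_of_le_one_right (apply_nonneg _ _) (tb_v_le q k)

theorem tb_contract_iter (φ : P1Map K d) (q : HeightOneSpectrum (𝓞 K)) (hq : GoodReductionAt φ q)
    (P R : P1 K) (n : ℕ) :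
    tbD (FinitePlace.mk q) (φ.toFun^[n] P) (φ.toFun^[n] R) ≤ tbD (FinitePlace.mk q) P R := by
  induction n with
  | zero => simp
  | succ n ih =>
    rw [Function.iterate_succ_apply', Function.iterate_succ_apply']
    exact (tb_contract φ q hq _ _).trans ih

noncomputable def tbX (A B C D : P1 K) : K :=
  tbW A.rep B.rep * tbW C.rep D.rep / (tbW A.rep D.rep * tbW C.rep B.rep)

theorem tb_v_X (v : FinitePlace K) (A B C D : P1 K) :
    v (tbX A B C D) = tbD v A B * tbD v C D / (tbD v A D * tbD v C B) := by
  have h1 := tbN_pos v A.rep_nonzero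
  have h2 := tbN_pos v B.rep_nonzero
  have h3 := tbN_pos v C.rep_nonzero
  have h4 := tbN_pos v D.rep_nonzero
  simp only [tbX, tbD, map_div₀, map_mul]
  field_simp

theorem tb_inj (P Q Q' R R' : P1 K) (hRQ' : R ≠ Q') (hR'Q' : R' ≠ Q')
    (hPQ : P ≠ Q) (hPQ' : P ≠ Q') (hQQ : Q ≠ Q')
    (h : tbX R Q P Q' = tbX R' Q P Q') : R = R' := by
  by_contra hne
  have a1 := tbW_ne hRQ'
  have a2 := tbW_ne hR'Q'
  have a3 := tbW_ne hPQ
  have a4 := tbW_ne hPQ'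
  have a5 := tbW_ne hQQ
  have a6 := tbW_ne hne
  simp only [tbX] at h
  rw [div_eq_div_iff (mul_ne_zero a1 a3) (mul_ne_zero a2 a3)] at h
  have h2 : (tbW P.rep Q'.rep * tbW P.rep Q.rep) * (tbW R.rep R'.rep * tbW Q.rep Q'.rep) = 0 := by
    have : tbW R.rep R'.rep * tbW Q.rep Q'.rep =
      tbW R.rep Q.rep * tbW R'.rep Q'.rep - tbW R'.rep Q.rep * tbW R.rep Q'.rep := by
      simp only [tbW]; ring
    rw [this]
    linear_combination h
  exact mul_ne_zero (mul_ne_zero a4 a3) (mul_ne_zero a6 a5) h2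

theorem tb_ident (P Q Q' A R : P1 K) (hRQ' : R ≠ Q') (hRP : R ≠ P) (hPQ : P ≠ Q) (hQA : Q' ≠ A) :
    (1 - tbX R Q P Q') * (1 - tbX R A Q' P) =
      tbW Q'.rep Q.rep * tbW P.rep A.rep / (tbW P.rep Q.rep * tbW Q'.rep A.rep) := by
  have a1 := tbW_ne hRQ'
  have a2 := tbW_ne hRP
  have a3 := tbW_ne hPQ
  have a4 := tbW_ne hQA
  have e1 : 1 - tbX R Q P Q' =
      tbW R.rep P.rep * tbW Q'.rep Q.rep / (tbW R.rep Q'.rep * tbW P.rep Q.rep) := by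
    rw [tbX, eq_div_iff (mul_ne_zero a1 a3), sub_mul, div_mul_cancel₀ _ (mul_ne_zero a1 a3)]
    simp only [tbW]; ring
  have e2 : 1 - tbX R A Q' P =
      tbW R.rep Q'.rep * tbW P.rep A.rep / (tbW R.rep P.rep * tbW Q'.rep A.rep) := by
    rw [tbX, eq_div_iff (mul_ne_zero a2 a4), sub_mul, div_mul_cancel₀ _ (mul_ne_zero a2 a4)]
    simp only [tbW]; ring
  rw [e1, e2]
  field_simp

theorem tbX_ne {A B C D : P1 K} (h1 : A ≠ B) (h2 : C ≠ D) (h3 : A ≠ D) (h4 : C ≠ B) :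
    tbX A B C D ≠ 0 :=
  div_ne_zero (mul_ne_zero (tbW_ne h1) (tbW_ne h2)) (mul_ne_zero (tbW_ne h3) (tbW_ne h4))

theorem tb_two_iter {α : Type*} (f : α → α) {Q Q' : α} (h1 : f Q = Q') (h2 : f Q' = Q) (n : ℕ) :
    (f^[n] Q = Q ∧ f^[n] Q' = Q') ∨ (f^[n] Q = Q' ∧ f^[n] Q' = Q) := by
  induction n with
  | zero => left; simp
  | succ n ih =>
    rw [Function.iterate_succ_apply', Function.iterate_succ_apply']
    rcases ih with ⟨a, b⟩ | ⟨a, b⟩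
    · right; rw [a, b]; exact ⟨h1, h2⟩
    · left; rw [a, b]; exact ⟨h2, h1⟩

theorem tb_SA (T : Finset (HeightOneSpectrum (𝓞 K))) (φ : P1Map K d)
    (hgr : GoodReductionOutside φ T) (P Q Q' A : P1 K) (hP : φ.toFun P = P)
    (h1 : φ.toFun Q = Q') (h2 : φ.toFun Q' = Q) (hne : Q ≠ Q') (hAP : A ≠ P)
    (hA : φ.toFun A = P) (E : Finset (P1 K))
    (hE : ∀ R ∈ E, ∃ n, 0 < n ∧ φ.toFun^[n] R = A) :
    (E.card : ℝ) ≤ Real.exp (45 * (T.card + Fintype.card (InfinitePlace K) : ℕ)) := by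
  have hPn : ∀ n, φ.toFun^[n] P = P := fun n => Function.iterate_fixed hP n
  have hAn : ∀ n, 0 < n → φ.toFun^[n] A = P := by
    intro n hn
    obtain ⟨m, rfl⟩ := Nat.exists_eq_succ_of_ne_zero hn.ne'
    rw [Function.iterate_succ_apply, hA, hPn]
  have hPQ : P ≠ Q := by rintro rfl; exact hne (hP.symm.trans h1)
  have hPQ' : P ≠ Q' := by rintro rfl; exact hne (h2.symm.trans hP)
  have hAQ : A ≠ Q := by rintro rfl; exact hPQ' (hA.symm.trans h1)
  have hAQ' : A ≠ Q' := by rintro rfl; exact hPQ (hA.symm.trans h2)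
  have hR : ∀ R ∈ E, R ≠ P ∧ R ≠ A ∧ R ≠ Q ∧ R ≠ Q' := by
    intro R hRE
    obtain ⟨n, hn, hnA⟩ := hE R hRE
    refine ⟨?_, ?_, ?_, ?_⟩
    · rintro rfl; exact hAP (hnA.symm.trans (hPn n))
    · rintro rfl; exact hAP (hnA.symm.trans (hAn n hn))
    · rintro rfl
      rcases tb_two_iter φ.toFun h1 h2 n with ⟨a, b⟩ | ⟨a, b⟩
      · exact hAQ (hnA.symm.trans a)
      · exact hAQ' (hnA.symm.trans a)
    · rintro rfl
      rcases tb_two_iter φ.toFun h1 h2 n with ⟨a, b⟩ | ⟨a, b⟩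
      · exact hAQ' (hnA.symm.trans b)
      · exact hAQ (hnA.symm.trans b)
  have hinj : Set.InjOn (fun R : P1 K => (tbX R Q P Q', tbX R A Q' P)) E := by
    intro R hR1 R' hR2 h
    exact tb_inj P Q Q' R R' (hR R hR1).2.2.2 (hR R' hR2).2.2.2 hPQ hPQ' hne (congrArg Prod.fst h)
  rw [← Finset.card_image_of_injOn hinj]
  refine tb_unit T (c := tbW Q'.rep Q.rep * tbW P.rep A.rep / (tbW P.rep Q.rep * tbW Q'.rep A.rep))
    ?_ (fun q => tbD (FinitePlace.mk q) Q' P / tbD (FinitePlace.mk q) Q' A) _ ?_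
  · exact div_ne_zero (mul_ne_zero (tbW_ne hne.symm) (tbW_ne hAP.symm))
      (mul_ne_zero (tbW_ne hPQ) (tbW_ne hAQ'.symm))
  intro x hx
  obtain ⟨R, hRE, rfl⟩ := Finset.mem_image.mp hx
  obtain ⟨r1, r2, r3, r4⟩ := hR R hRE
  obtain ⟨n, hn, hnA⟩ := hE R hRE
  refine ⟨tbX_ne r3 hPQ' r4 hPQ, tbX_ne r2 hPQ'.symm r1 hAQ'.symm,
    tb_ident P Q Q' A R r4 r1 hPQ hAQ'.symm, ?_⟩
  intro q hq
  have G := hgr q hq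
  set v := FinitePlace.mk q with hv
  have hcon : ∀ X Y, tbD v (φ.toFun X) (φ.toFun Y) ≤ tbD v X Y := tb_contract φ q G
  have hcon' : ∀ n X Y, tbD v (φ.toFun^[n] X) (φ.toFun^[n] Y) ≤ tbD v X Y :=
    fun n X Y => tb_contract_iter φ q G X Y n
  have hd : tbD v P Q = tbD v P Q' := by
    apply le_antisymm
    · simpa [hP, h2] using hcon P Q'
    · simpa [hP, h1] using hcon P Q
  have hnP : φ.toFun^[n+1] R = P := by rw [Function.iterate_succ_apply', hnA, hA]
  have b1 : tbD v P Q ≤ tbD v R Q ∧ tbD v P Q ≤ tbD v R Q' := by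
    have c1 := hcon' (n+1) R Q
    have c2 := hcon' (n+1) R Q'
    rw [hnP] at c1 c2
    rcases tb_two_iter φ.toFun h1 h2 (n+1) with ⟨a, b⟩ | ⟨a, b⟩
    · rw [a] at c1; rw [b] at c2; exact ⟨c1, hd ▸ c2⟩
    · rw [a] at c1; rw [b] at c2; exact ⟨hd ▸ c1, c2⟩
  have hqq : tbD v Q Q' ≤ tbD v P Q := by
    refine (tbD_ultra v Q P Q').trans (max_le ?_ hd.ge)
    rw [tbD_comm]
  have e1 : tbD v R Q = tbD v R Q' := by
    apply le_antisymm
    · refine (tbD_ultra v R Q' Q).trans (max_le le_rfl ?_)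
      rw [tbD_comm]; exact hqq.trans b1.2
    · exact (tbD_ultra v R Q Q').trans (max_le le_rfl (hqq.trans b1.1))
  have f1 : tbD v A P ≤ tbD v R P := by
    have := hcon' n R P
    rwa [hnA, hPn] at this
  have f2 : tbD v A P ≤ tbD v R A := by
    have := hcon' n R A
    rwa [hnA, hAn n hn] at this
  have e2 : tbD v R A = tbD v R P := by
    apply le_antisymm
    · refine (tbD_ultra v R P A).trans (max_le le_rfl ?_)
      rw [tbD_comm]; exact f1
    · exact (tbD_ultra v R A P).trans (max_le le_rfl f2)
  have f3 : tbD v Q' P ≤ tbD v Q' A := by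
    have := hcon Q' A
    rw [h2, hA, tbD_comm, hd, tbD_comm] at this
    exact this
  have w : v (tbX R A Q' P) = tbD v Q' P / tbD v Q' A := by
    rw [tb_v_X, e2, mul_div_mul_left _ _ (tbD_pos v r1).ne']
  refine ⟨?_, ?_, w⟩
  · show v (tbX R Q P Q') = 1
    rw [tb_v_X, e1, hd, div_self]
    exact mul_ne_zero (tbD_pos v r4).ne' (tbD_pos v hPQ').ne'
  · show v (tbX R A Q' P) ≤ 1
    rw [w]
    exact div_le_one_of_le₀ f3 (tbD_pos v hAQ'.symm).le

noncomputable def tbLin (b p : Fin 2 → K) (i : Fin 2) : Polynomial K :=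
  Polynomial.C (b i) + Polynomial.X * Polynomial.C (p i)

theorem tbLin_natDegree (b p : Fin 2 → K) (i : Fin 2) : (tbLin b p i).natDegree ≤ 1 := by
  unfold tbLin
  compute_degree

theorem tbLin_coeff (b p : Fin 2 → K) (i : Fin 2) : (tbLin b p i).coeff 1 = p i := by
  simp [tbLin, Polynomial.coeff_C]

theorem tbLin_hom (b p : Fin 2 → K) {n : ℕ} {H : MvPolynomial (Fin 2) K} (hH : H.IsHomogeneous n) :
    (aeval (tbLin b p) H).natDegree ≤ n ∧ (aeval (tbLin b p) H).coeff n = eval p H := by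
  have hm : ∀ m ∈ H.support, m 0 + m 1 = n := by
    intro m hm
    rw [← hH (mem_support_iff.mp hm), Finsupp.weight_apply, Finsupp.sum_fintype _ _ (by simp)]
    simp [Fin.sum_univ_two]
  have hp : ∀ (i : Fin 2) (k : ℕ), (tbLin b p i ^ k).natDegree ≤ k := by
    intro i k
    refine Polynomial.natDegree_pow_le.trans ?_
    calc k * (tbLin b p i).natDegree ≤ k * 1 := Nat.mul_le_mul_left _ (tbLin_natDegree b p i)
      _ = k := mul_one k
  have hc : ∀ (i : Fin 2) (k : ℕ), (tbLin b p i ^ k).coeff k = p i ^ k := by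
    intro i k
    have := Polynomial.coeff_pow_of_natDegree_le (m := k) (tbLin_natDegree b p i)
    rwa [mul_one, tbLin_coeff] at this
  rw [aeval_def, eval₂_eq', eval_eq']
  constructor
  · apply Polynomial.natDegree_sum_le_of_forall_le
    intro m hms
    rw [Fin.prod_univ_two, Polynomial.algebraMap_eq]
    refine (Polynomial.natDegree_C_mul_le _ _).trans (Polynomial.natDegree_mul_le.trans ?_)
    rw [← hm m hms]
    exact add_le_add (hp _ _) (hp _ _)
  · rw [Polynomial.finset_sum_coeff]
    refine Finset.sum_congr rfl fun m hms => ?_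
    rw [Fin.prod_univ_two, Fin.prod_univ_two, Polynomial.algebraMap_eq, Polynomial.coeff_C_mul]
    congr 1
    rw [← hm m hms, Polynomial.coeff_mul_add_eq_of_natDegree_le (hp _ _) (hp _ _), hc, hc]

theorem tb_exists_b {p : Fin 2 → K} (hp : p ≠ 0) : ∃ b : Fin 2 → K, tbW p b ≠ 0 := by
  by_cases h : p 0 = 0
  · refine ⟨![1, 0], ?_⟩
    have : p 1 ≠ 0 := by
      intro h1; apply hp; funext i; fin_cases i
      · exact h
      · exact h1
    simpa [tbW] using this
  · exact ⟨![0, 1], by simpa [tbW] using h⟩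

theorem tb_phi_eq (φ : P1Map K d) {P A : P1 K} (h : φ.toFun A = P) :
    P.rep 1 * eval A.rep φ.F = P.rep 0 * eval A.rep φ.G := by
  rw [← A.mk_rep, tb_phi_mk, ← P.mk_rep, Projectivization.mk_eq_mk_iff'] at h
  obtain ⟨s, hs⟩ := h
  have h0 := congrFun hs 0
  have h1 := congrFun hs 1
  simp only [Pi.smul_apply, smul_eq_mul, Matrix.cons_val_zero, Matrix.cons_val_one,
    P.mk_rep, A.mk_rep] at h0 h1
  rw [← h0, ← h1]; ring

theorem tb_lin_aeval (b p : Fin 2 → K) (H : MvPolynomial (Fin 2) K) {L : Type*} [Field L]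
    [Algebra K L] (x : L) :
    Polynomial.aeval x (aeval (tbLin b p) H) =
      aeval ![algebraMap K L (b 0) + x * algebraMap K L (p 0),
        algebraMap K L (b 1) + x * algebraMap K L (p 1)] H := by
  rw [← AlgHom.comp_apply]
  congr 1
  apply MvPolynomial.algHom_ext
  intro i
  fin_cases i <;> simp [tbLin] <;> ring

theorem tb_pre (hd : 2 ≤ d) (φ : P1Map K d) (P : P1 K) (hP : φ.toFun P = P) (E : Finset (P1 K))
    (hE : ∀ A ∈ E, A ≠ P ∧ φ.toFun A = P) : E.card ≤ d - 1 := by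
  set p := P.rep with hpdef
  have hp : p ≠ 0 := P.rep_nonzero
  obtain ⟨b, hb⟩ := tb_exists_b hp
  set gF := aeval (tbLin b p) φ.F with hgF
  set gG := aeval (tbLin b p) φ.G with hgG
  obtain ⟨dF, cF⟩ := tbLin_hom b p φ.homF
  obtain ⟨dG, cG⟩ := tbLin_hom b p φ.homG
  set f := Polynomial.C (p 1) * gF - Polynomial.C (p 0) * gG with hf
  have hfd : f.natDegree ≤ d - 1 := by
    apply Polynomial.natDegree_le_pred
    · refine (Polynomial.natDegree_sub_le _ _).trans (max_le ?_ ?_)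
      · exact (Polynomial.natDegree_C_mul_le _ _).trans dF
      · exact (Polynomial.natDegree_C_mul_le _ _).trans dG
    · rw [hf, Polynomial.coeff_sub, Polynomial.coeff_C_mul, Polynomial.coeff_C_mul, cF, cG,
        tb_phi_eq φ hP, sub_self]
  have hf0 : f ≠ 0 := by
    intro h0
    have h1 : Polynomial.C (p 1) * gF = Polynomial.C (p 0) * gG := sub_eq_zero.mp h0
    -- no common root
    have nr : ∀ x : AlgebraicClosure K, ¬ (Polynomial.aeval x gF = 0 ∧ Polynomial.aeval x gG = 0) := by
      rintro x ⟨x1, x2⟩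
      rw [hgF, tb_lin_aeval] at x1
      rw [hgG, tb_lin_aeval] at x2
      obtain ⟨y1, y2⟩ := φ.coprime _ _ x1 x2
      apply hb
      apply (algebraMap K (AlgebraicClosure K)).injective
      rw [tbW, map_sub, map_mul, map_mul, map_zero]
      linear_combination (algebraMap K (AlgebraicClosure K) (p 0)) * y2
        - (algebraMap K (AlgebraicClosure K) (p 1)) * y1
    have rel : ∀ x : AlgebraicClosure K, algebraMap K _ (p 1) * Polynomial.aeval x gF
        = algebraMap K _ (p 0) * Polynomial.aeval x gG := by
      intro x
      have := congrArg (Polynomial.aeval x) h1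
      simpa using this
    have hp' : eval p φ.F ≠ 0 ∨ eval p φ.G ≠ 0 := by
      by_contra hcon
      push Not at hcon
      apply tb_eval_ne φ hp
      rw [hcon.1, hcon.2]
      simp
    have hrel := tb_phi_eq φ hP
    rw [← hpdef] at hrel
    by_cases h00 : p 0 = 0
    · have h11 : p 1 ≠ 0 := by
        intro h11; apply hp; funext i; fin_cases i
        · exact h00
        · exact h11
      have hG : eval p φ.G ≠ 0 := by
        rcases hp' with h | h
        · rw [h00, zero_mul] at hrel
          exact absurd hrel (mul_ne_zero h11 h)
        · exact h
      have hdeg : gG.degree ≠ 0 := by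
        intro hdeg
        have : gG.coeff d = 0 := Polynomial.coeff_eq_zero_of_natDegree_lt (by
          rw [Polynomial.natDegree_eq_of_degree_eq_some hdeg]; show 0 < d; omega)
        exact hG (cG.symm.trans this)
      obtain ⟨x, hx⟩ := IsAlgClosed.exists_aeval_eq_zero (AlgebraicClosure K) gG hdeg
      refine nr x ⟨?_, hx⟩
      have := rel x
      rw [h00, map_zero, zero_mul] at this
      refine (mul_eq_zero.mp this).resolve_left ?_
      simpa using h11
    · have hF : eval p φ.F ≠ 0 := by
        rcases hp' with h | h
        · exact h
        · intro hF0
          rw [hF0, mul_zero] at hrel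
          exact mul_ne_zero h00 h hrel.symm
      have hdeg : gF.degree ≠ 0 := by
        intro hdeg
        have : gF.coeff d = 0 := Polynomial.coeff_eq_zero_of_natDegree_lt (by
          rw [Polynomial.natDegree_eq_of_degree_eq_some hdeg]; show 0 < d; omega)
        exact hF (cF.symm.trans this)
      obtain ⟨x, hx⟩ := IsAlgClosed.exists_aeval_eq_zero (AlgebraicClosure K) gF hdeg
      refine nr x ⟨hx, ?_⟩
      have := rel x
      rw [hx, mul_zero] at this
      refine (mul_eq_zero.mp this.symm).resolve_left ?_
      simpa using h00
  -- the parameter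
  set t : P1 K → K := fun A => tbW A.rep b / tbW p A.rep with ht
  have hW : ∀ A ∈ E, tbW p A.rep ≠ 0 := fun A hA => tbW_ne (hE A hA).1.symm
  have hpar : ∀ A ∈ E, ∀ i, b i + t A * p i = (tbW p b / tbW p A.rep) * A.rep i := by
    intro A hA i
    have := hW A hA
    rw [ht]
    simp only
    field_simp
    fin_cases i
    · simp only [Fin.zero_eta, tbW]; ring
    · simp only [Fin.mk_one, tbW]; ring
  have hinj : Set.InjOn t E := by
    intro A hA B hB h
    rw [← A.mk_rep, ← B.mk_rep, Projectivization.mk_eq_mk_iff']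
    refine ⟨(tbW p A.rep / tbW p b) * (tbW p b / tbW p B.rep), ?_⟩
    funext i
    have e1 := hpar A hA i
    have e2 := hpar B hB i
    rw [h, e2] at e1
    have n1 := hW A hA
    rw [Pi.smul_apply, smul_eq_mul, mul_assoc, e1]
    field_simp
  have hroot : ∀ A ∈ E, t A ∈ f.roots.toFinset := by
    intro A hA
    rw [Multiset.mem_toFinset, Polynomial.mem_roots hf0, Polynomial.IsRoot.def]
    have ev : ∀ H : MvPolynomial (Fin 2) K, H.IsHomogeneous d →
        Polynomial.eval (t A) (aeval (tbLin b p) H)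
          = (tbW p b / tbW p A.rep) ^ d * eval A.rep H := by
      intro H hH
      have := tb_lin_aeval b p H (t A)
      rw [Polynomial.coe_aeval_eq_eval] at this
      rw [this, ← tb_hom_eval hH, ← aeval_eq_eval]
      congr 2
      funext i
      rw [← hpar A hA i]
      fin_cases i <;> simp
    rw [hf, Polynomial.eval_sub, Polynomial.eval_mul, Polynomial.eval_mul, Polynomial.eval_C,
      Polynomial.eval_C, ev _ φ.homF, ev _ φ.homG]
    have := tb_phi_eq φ (hE A hA).2
    rw [← hpdef] at this
    linear_combination (tbW p b / tbW p A.rep) ^ d * this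
  calc E.card = (E.image t).card := (Finset.card_image_of_injOn hinj).symm
    _ ≤ f.roots.toFinset.card := by
        apply Finset.card_le_card
        intro x hx
        obtain ⟨A, hA, rfl⟩ := Finset.mem_image.mp hx
        exact hroot A hA
    _ ≤ f.roots.card := Multiset.toFinset_card_le _
    _ ≤ f.natDegree := Polynomial.card_roots' f
    _ ≤ d - 1 := hfd

theorem tb_finite_of {α : Type*} (X : Set α) (N : ℕ)
    (h : ∀ E : Finset α, (∀ x ∈ E, x ∈ X) → E.card ≤ N) :
    ∃ F : Finset α, (∀ x, x ∈ F ↔ x ∈ X) ∧ F.card ≤ N := by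
  have hfin : X.Finite := by
    by_contra hinf
    obtain ⟨E, hE, hc⟩ := Set.Infinite.exists_subset_card_eq hinf (N + 1)
    have := h E (fun x hx => hE hx)
    omega
  exact ⟨hfin.toFinset, fun x => by simp, h _ (fun x hx => by simpa using hx)⟩

theorem tb_const (d s : ℕ) (hd : 2 ≤ d) (hs : 1 ≤ s) :
    ((d - 1 : ℕ) : ℝ) * ((⌊Real.exp (45 * (s : ℕ))⌋₊ + 1 : ℕ) : ℝ) ≤ L4const d s := by
  have hs' : (1 : ℝ) ≤ s := by exact_mod_cast hs
  have hC : Real.exp (45 * (s : ℕ)) ≤ Cconst 3 s := by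
    rw [Cconst]
    apply Real.exp_le_exp.mpr
    have : ((6 * (3 : ℕ) : ℝ)) ^ (3 * 3) = 198359290368 := by norm_num
    rw [this]
    push_cast
    nlinarith
  have hfl := Nat.floor_le (Real.exp_pos (45 * (s : ℕ) : ℝ)).le
  have hd' : ((d - 1 : ℕ) : ℝ) = (d : ℝ) - 1 := by
    rw [Nat.cast_sub (by omega)]; simp
  have hd0 : (0 : ℝ) ≤ (d : ℝ) - 1 := by rw [← hd']; exact Nat.cast_nonneg _
  rw [L4const, hd', mul_comm]
  apply mul_le_mul_of_nonneg_right _ hd0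
  push_cast
  linarith

end TBDyn

/-- **Lemma (tail of a fixed point in the presence of a two-cycle).** If `P ∈ ℙ¹(K)` is a
fixed point of `φ` and `Q ∈ ℙ¹(K)` is a periodic point of `φ` of period `2`, then
`|Tail(φ,K,P)| ≤ L₄(d,|S|) = (C(3,|S|) + 3)(d-1)`. -/
theorem tailOf_fixed_point_bound_of_two_cycle
    {K : Type*} [Field K] [NumberField K]
    (T : Finset (HeightOneSpectrum (𝓞 K))) {d : ℕ} (hd : 2 ≤ d)
    (φ : P1Map K d) (hgr : GoodReductionOutside φ T)
    (P : P1 K) (hfix : φ.toFun P = P)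
    (Q : P1 K) (hQ : Function.minimalPeriod φ.toFun Q = 2) :
    (TailOf φ P).Finite ∧ ((TailOf φ P).ncard : ℝ) ≤ L4const d (sCard K T) := by
  have h2 : φ.toFun (φ.toFun Q) = Q := by
    have := Function.iterate_minimalPeriod (f := φ.toFun) (x := Q)
    rw [hQ] at this
    simpa using this
  have hne : Q ≠ φ.toFun Q := by
    intro h
    have : Function.minimalPeriod φ.toFun Q = 1 :=
      Function.minimalPeriod_eq_one_iff_isFixedPt.mpr h.symm
    omega
  obtain ⟨F, hF, hFc⟩ := tb_finite_of {A : P1 K | A ≠ P ∧ φ.toFun A = P} (d - 1)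
    (fun E hE => tb_pre hd φ P hfix E hE)
  set M := ⌊Real.exp (45 * (sCard K T : ℕ))⌋₊ with hM
  have hS : ∀ A : P1 K, ∃ B : Finset (P1 K), A ∈ F →
      (∀ R, R ∈ B ↔ ∃ n, 0 < n ∧ φ.toFun^[n] R = A) ∧ B.card ≤ M := by
    intro A
    by_cases hA : A ∈ F
    · obtain ⟨a1, a2⟩ := (hF A).mp hA
      obtain ⟨B, b1, b2⟩ := tb_finite_of {R : P1 K | ∃ n, 0 < n ∧ φ.toFun^[n] R = A} M (by
        intro E hE
        exact Nat.le_floor (tb_SA T φ hgr P Q (φ.toFun Q) A hfix rfl h2 hne a1 a2 E hE))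
      exact ⟨B, fun _ => ⟨b1, b2⟩⟩
    · exact ⟨∅, fun h => absurd h hA⟩
  choose B hB using hS
  have hsub : TailOf φ P ⊆ ((F.biUnion fun A => insert A (B A) : Finset (P1 K)) : Set (P1 K)) := by
    rintro R ⟨hR, hn⟩
    have hspec := Nat.find_spec hn
    have hmin := fun m => Nat.find_min hn (m := m)
    set n := Nat.find hn
    have hn0 : n ≠ 0 := by
      intro h0
      rw [h0] at hspec
      apply hR
      refine ⟨1, one_pos, ?_⟩
      have : R = P := hspec
      rw [this]
      exact hfix
    obtain ⟨m, hm⟩ := Nat.exists_eq_succ_of_ne_zero hn0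
    rw [hm, Nat.succ_eq_add_one, Function.iterate_succ_apply'] at hspec
    have hAF : φ.toFun^[m] R ∈ F := (hF _).mpr ⟨hmin m (by omega), hspec⟩
    rw [Finset.mem_coe, Finset.mem_biUnion]
    refine ⟨_, hAF, ?_⟩
    rw [Finset.mem_insert]
    rcases Nat.eq_zero_or_pos m with h0 | h0
    · left; rw [h0]; rfl
    · right; exact ((hB _ hAF).1 R).mpr ⟨m, h0, rfl⟩
  refine ⟨(Finset.finite_toSet _).subset hsub, ?_⟩
  have hcard : (TailOf φ P).ncard ≤ (d - 1) * (M + 1) := by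
    refine (Set.ncard_le_ncard hsub (Finset.finite_toSet _)).trans ?_
    rw [Set.ncard_coe_finset]
    refine (Finset.card_biUnion_le_card_mul _ _ (M + 1) ?_).trans (Nat.mul_le_mul_right _ hFc)
    intro A hA
    exact (Finset.card_insert_le _ _).trans (Nat.add_le_add_right (hB A hA).2 1)
  have hs : 1 ≤ sCard K T := by
    have := tb_one_le_card (K := K)
    unfold sCard
    omega
  calc ((TailOf φ P).ncard : ℝ) ≤ (((d - 1) * (M + 1) : ℕ) : ℝ) := by exact_mod_cast hcard
    _ = ((d - 1 : ℕ) : ℝ) * ((M + 1 : ℕ) : ℝ) := by rw [Nat.cast_mul]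
    _ ≤ _ := tb_const d _ hd hs
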